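/- arXiv:2012.07568 — 7 statements merged into one kernel-verified Lean document; each statement's English description precedes it below -/
import Mathlib

section
/- Let n ≥ 3 and b, c be positive integers with b ≥ 2, n·b ≠ 9, b ≠ c, and c ≤ 2(b − 1), let ε₁, ε₂ ∈ {−1, +1}, and set f(X) = X^n + b·ε₁·X^{n−1} + c·ε₂ ∈ ℤ[X]. If f is reducible in ℤ[X], then there exist δ ∈ {−1, +1} and g ∈ ℤ[X] such that f(X) = (X + δ)·g, g is irreducible in ℤ[X], and g is non-reciprocal (i.e., X^{deg g}·g(1/X) equals neither g nor −g). -/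
open Polynomial

/-!
Put `N = n - 1`, `β = -bε₁`, `e = cε₂`, so that the trinomial is `X ^ N * (X - β) + e` and each of
its complex roots satisfies `‖α‖ ^ N * ‖β - α‖ = |e|`. The bound `|e| ≤ 2 * (|β| - 1)` then leaves a
gap in the moduli of the roots, from a radius `r` near `1` up to nearly `|β|`. Two roots beyond the
gap would contradict Landau's bound on the Mahler measure by the Euclidean norm of the coefficients,
so in any factorization one factor `h` has all its roots in the disc of radius `r`. There
`‖β - α‖ ≥ |β| - r`, and as `h(β)` divides `e`, this forces `deg h ≤ 1`, with some extra care when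
`|β| ≤ 3`. A linear factor must be `X - 1` or `X + 1`, not both and neither one twice, so the
cofactor is irreducible. Finally, a product of reciprocal polynomials is reciprocal and the
trinomial is not, so the cofactor is not.
-/

section NormedField

variable {K : Type*} [NormedField K] {p : K[X]}

lemma nnnorm_eval_eq_prod_roots (hs : p.Splits) (hp : p.Monic) (x : K) :
    ‖p.eval x‖₊ = (p.roots.map fun α => ‖x - α‖₊).prod := by
  rw [hs.eval_eq_prod_roots_of_monic hp]
  exact (p.roots.prod_hom' nnnormHom fun α => x - α).symm

lemma pow_natDegree_le_norm_eval (hs : p.Splits) (hp : p.Monic) {x : K} {r : ℝ} (hr : 0 ≤ r)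
    (h : ∀ α ∈ p.roots, r ≤ ‖x - α‖) : r ^ p.natDegree ≤ ‖p.eval x‖ := by
  lift r to NNReal using hr
  have hle : r ^ p.natDegree ≤ ‖p.eval x‖₊ := by
    rw [nnnorm_eval_eq_prod_roots hs hp, hs.natDegree_eq_card_roots,
      ← Multiset.card_map fun α => ‖x - α‖₊]
    exact Multiset.pow_card_le_prod (Multiset.forall_mem_map_iff.2 h)
  exact_mod_cast hle

lemma norm_sub_pow_natDegree_le_norm_eval (hs : p.Splits) (hp : p.Monic) {x : K} {r : ℝ}
    (hr : r ≤ ‖x‖) (h : ∀ α ∈ p.roots, ‖α‖ ≤ r) : (‖x‖ - r) ^ p.natDegree ≤ ‖p.eval x‖ :=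
  pow_natDegree_le_norm_eval hs hp (sub_nonneg.2 hr) fun α hα =>
    (sub_le_sub_left (h α hα) ‖x‖).trans (norm_sub_norm_le x α)

lemma norm_sub_le_norm_eval (hs : p.Splits) (hp : p.Monic) {x α : K}
    (h : ∀ γ ∈ p.roots, 1 ≤ ‖x - γ‖) (hα : α ∈ p.roots) : ‖x - α‖ ≤ ‖p.eval x‖ := by
  have hle : ‖x - α‖₊ ≤ ‖p.eval x‖₊ := by
    have hone : ∀ s ∈ p.roots.map fun γ => ‖x - γ‖₊, 1 ≤ s := Multiset.forall_mem_map_iff.2 h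
    rw [nnnorm_eval_eq_prod_roots hs hp]
    exact Multiset.single_le_prod hone _ (Multiset.mem_map_of_mem _ hα)
  exact_mod_cast hle

end NormedField

lemma eq_X_sub_C_pow_natDegree {R : Type*} [CommRing R] [IsDomain R] {p : R[X]} (hs : p.Splits)
    (hp : p.Monic) {z : R} (h : ∀ α ∈ p.roots, α = z) : p = (X - C z) ^ p.natDegree := by
  conv_lhs => rw [hs.eq_prod_roots_of_monic hp, Multiset.eq_replicate_card.2 h,
    Multiset.map_replicate, Multiset.prod_replicate, ← hs.natDegree_eq_card_roots]

lemma norm_leadingCoeff_mul_norm_le_mahlerMeasure {p : ℂ[X]} {α : ℂ} (hα : p.IsRoot α) :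
    ‖p.leadingCoeff‖ * ‖α‖ ≤ p.mahlerMeasure := by
  obtain ⟨q, rfl⟩ := dvd_iff_isRoot.2 hα
  rw [mahlerMeasure_mul, mahlerMeasure_X_sub_C, leadingCoeff_mul, leadingCoeff_X_sub_C, one_mul,
    mul_comm]
  gcongr
  · exact le_max_right 1 ‖α‖
  · exact leadingCoeff_le_mahlerMeasure q

lemma norm_eval_map_intCast (p : ℤ[X]) (x : ℤ) :
    ‖(p.map (Int.castRingHom ℂ)).eval (x : ℂ)‖ = |((p.eval x : ℤ) : ℝ)| := by
  rw [eval_intCast_map, Int.cast_id, eq_intCast, Complex.norm_intCast]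

section Gap

variable {N : ℕ} {b c t : ℝ}

lemma lt_pow_mul_sub_of_three_le (hN : 3 ≤ N) (hb : 3 ≤ b) (hc : c ≤ 2 * (b - 1))
    (ht : 7 / 5 < t) (htb : t < b - 1 / 2) : c < t ^ N * (b - t) := by
  -- On each interval the concave function `t * (b - t)` is at least its smaller endpoint value.
  have cubic : 2 * (b - 1) < t ^ 2 * (t * (b - t)) := by
    rcases le_or_gt t (3 / 2) with ht' | ht'
    · have hchord : 7 / 5 * (b - 7 / 5) ≤ t * (b - t) := by nlinarith
      nlinarith
    rcases le_or_gt t (b - 1) with htb' | htb'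
    · have hchord : b - 1 ≤ t * (b - t) := by nlinarith
      nlinarith
    · have hchord : (b - 1 / 2) * (1 / 2) ≤ t * (b - t) := by nlinarith
      nlinarith
  calc c ≤ 2 * (b - 1) := hc
    _ < t ^ 3 * (b - t) := by linarith
    _ ≤ t ^ N * (b - t) := by gcongr <;> linarith

lemma one_lt_pow_mul_two_sub (hN : 3 ≤ N) (ht : 1 < t) (ht' : t < 8 / 5) :
    1 < t ^ N * (2 - t) := by
  have hfactor : 0 < (t - 1) * (1 + t + t ^ 2 * (1 - t)) :=
    mul_pos (sub_pos.2 ht) (by nlinarith)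
  calc 1 < t ^ 3 * (2 - t) := by linarith
    _ ≤ t ^ N * (2 - t) := by gcongr <;> linarith

end Gap

lemma eq_two_and_eq_two_and_eq_one_of_pow_mul_le {N : ℕ} {M j : ℤ} (hN : 2 ≤ N) (hM : 2 ≤ M)
    (hj : 1 ≤ j) (h : M ^ N * j ≤ 2 * (M + j - 1)) : N = 2 ∧ M = 2 ∧ j = 1 := by
  have hM0 : 0 ≤ M * (M - 2) := mul_nonneg (by linarith) (by linarith)
  have hM2 : 2 ≤ M ^ 2 - 2 := by nlinarith
  have hj0 : 0 ≤ (M ^ 2 - 2) * (j - 1) := mul_nonneg (by linarith) (by linarith)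
  have hpow : M ^ 2 * j ≤ M ^ N * j := by gcongr; linarith
  have hMj : M = 2 ∧ j = 1 := by
    have hM_eq : M * (M - 2) = 0 := by linarith
    have hj_eq : (M ^ 2 - 2) * (j - 1) = 0 := by linarith
    exact ⟨sub_eq_zero.1 ((mul_eq_zero.1 hM_eq).resolve_left (by linarith)),
      sub_eq_zero.1 ((mul_eq_zero.1 hj_eq).resolve_left (by linarith))⟩
  obtain ⟨rfl, rfl⟩ := hMj
  refine ⟨hN.antisymm' ((Nat.pow_le_pow_iff_right one_lt_two).1 ?_), rfl, rfl⟩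
  zify
  linarith

/-- A reciprocal polynomial: one that agrees up to sign with its reversal `X ^ deg p * p (1 / X)`.
Unlike in the usual definition, `p.coeff 0 = 0` is allowed. -/
def IsReciprocal {R : Type*} [Ring R] (p : R[X]) : Prop :=
  p.reverse = p ∨ p.reverse = -p

lemma IsReciprocal.mul {R : Type*} [Ring R] [NoZeroDivisors R] {p q : R[X]}
    (hp : IsReciprocal p) (hq : IsReciprocal q) : IsReciprocal (p * q) := by
  rw [IsReciprocal, reverse_mul_of_domain]
  rcases hp with hp | hp <;> rcases hq with hq | hq <;> simp [hp, hq]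

lemma isReciprocal_X_sub_C {R : Type*} [Ring R] [Nontrivial R] {m : R} (hm : m = 1 ∨ m = -1) :
    IsReciprocal (X - C m) := by
  have hrev : (X - C m).reverse = 1 - C m * X := by
    rw [sub_eq_add_neg, ← C_neg, reverse_add_C, ← one_mul X, reverse_mul_X, ← C_1, reverse_C]
    simp [sub_eq_add_neg]
  rw [IsReciprocal, hrev]
  rcases hm with rfl | rfl
  · right; simp
  · left; simp [add_comm]

/-- The trinomial `X ^ (N + 1) - β * X ^ N + e`, written as a perturbation of `X ^ N * (X - β)`:
this form exhibits its value `e` at `β` and the relation `α ^ N * (β - α) = e` for its roots. -/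
noncomputable def harringtonPoly {R : Type*} [CommRing R] (N : ℕ) (β e : R) : R[X] :=
  X ^ N * (X - C β) + C e

namespace harringtonPoly

section CommRing

variable {R : Type*} [CommRing R] {N : ℕ} {β e : R}

lemma map_eq {S : Type*} [CommRing S] (f : R →+* S) :
    (harringtonPoly N β e).map f = harringtonPoly N (f β) (f e) := by
  simp [harringtonPoly]

lemma eval_eq (x : R) : (harringtonPoly N β e).eval x = x ^ N * (x - β) + e := by
  simp [harringtonPoly]

lemma coeff_eq (k : ℕ) : (harringtonPoly N β e).coeff k =
    (if k = N + 1 then 1 else 0) - (if k = N then β else 0) + if k = 0 then e else 0 := by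
  simp [harringtonPoly, mul_sub, ← pow_succ, coeff_X_pow, coeff_C]

lemma natDegree_eq [Nontrivial R] : (harringtonPoly N β e).natDegree = N + 1 := by
  rw [harringtonPoly, natDegree_add_C, (monic_X_pow N).natDegree_mul (monic_X_sub_C β),
    natDegree_X_pow, natDegree_X_sub_C]

lemma monic [Nontrivial R] : (harringtonPoly N β e).Monic := by
  rw [Monic, leadingCoeff, natDegree_eq, coeff_eq]
  simp

lemma natDegree_add_natDegree_eq [Nontrivial R] {g h : R[X]} (hg : g.Monic) (hh : h.Monic)
    (hgh : g * h = harringtonPoly N β e) : g.natDegree + h.natDegree = N + 1 := by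
  rw [← natDegree_eq (N := N) (β := β) (e := e), ← hgh, hg.natDegree_mul hh]

lemma not_isReciprocal (hN : 2 ≤ N) (hβ : β ≠ 0) : ¬ IsReciprocal (harringtonPoly N β e) := by
  have : Nontrivial R := ⟨β, 0, hβ⟩
  have hrev : (harringtonPoly N β e).reverse.coeff 1 = -β := by
    rw [coeff_one_reverse, nextCoeff_of_natDegree_pos (by simp [natDegree_eq]), natDegree_eq,
      Nat.add_sub_cancel, coeff_eq]
    simp [show N ≠ 0 by omega]
  have hcoeff : (harringtonPoly N β e).coeff 1 = 0 := by
    rw [coeff_eq]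
    simp [show N ≠ 0 by omega, show 1 ≠ N by omega]
  rintro (h | h) <;> rw [h] at hrev
  · exact hβ (neg_eq_zero.1 (hrev.symm.trans hcoeff))
  · rw [coeff_neg, hcoeff, neg_zero] at hrev
    exact hβ (neg_eq_zero.1 hrev.symm)

lemma mul_eq_of_X_sub_C_sq_dvd [IsDomain R] {z : R} (hz : z ≠ 0)
    (h : (X - C z) ^ 2 ∣ harringtonPoly N β e) : (N + 1) * z = N * β := by
  have hder : (derivative (harringtonPoly N β e)).eval z = 0 :=
    ((one_lt_rootMultiplicity_iff_isRoot monic.ne_zero).1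
      ((le_rootMultiplicity_iff monic.ne_zero).2 h)).2
  have hmul : z ^ N * ((N + 1) * z - N * β) = 0 := by
    cases N with
    | zero => simp [harringtonPoly] at hder
    | succ M =>
      simp only [harringtonPoly, derivative_add, derivative_mul, derivative_X_pow, derivative_sub,
        derivative_X, derivative_C, eval_add, eval_mul, eval_sub, eval_pow, eval_X, eval_C,
        eval_natCast, eval_one, eval_zero, map_natCast, Nat.add_sub_cancel] at hder
      linear_combination z * hder
  exact sub_eq_zero.1 ((mul_eq_zero.1 hmul).resolve_left (pow_ne_zero N hz))

end CommRing

section NormedField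

variable {K : Type*} [NormedField K] {N : ℕ} {β e : K} {p : K[X]}

lemma norm_pow_mul_norm_sub {α : K} (hα : (harringtonPoly N β e).IsRoot α) :
    ‖α‖ ^ N * ‖β - α‖ = ‖e‖ := by
  rw [← norm_pow, ← norm_mul]
  rw [IsRoot, eval_eq] at hα
  congr 1
  linear_combination -hα

lemma norm_le_or_le_norm_of_isRoot {α : K} (hα : (harringtonPoly N β e).IsRoot α) {r B : ℝ}
    (hgap : ∀ t, r < t → t < B → ‖e‖ < t ^ N * (‖β‖ - t)) : ‖α‖ ≤ r ∨ B ≤ ‖α‖ := by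
  by_contra! h
  have hle : ‖α‖ ^ N * (‖β‖ - ‖α‖) ≤ ‖α‖ ^ N * ‖β - α‖ := by
    gcongr
    exact norm_sub_norm_le β α
  linarith [hgap ‖α‖ h.1 h.2, norm_pow_mul_norm_sub hα]

lemma norm_eval_zero_pow_mul_norm_eval (hs : p.Splits) (hp : p.Monic)
    (hdvd : p ∣ harringtonPoly N β e) :
    ‖p.eval 0‖ ^ N * ‖p.eval β‖ = ‖e‖ ^ p.natDegree := by
  have hroot : ∀ α ∈ p.roots, ‖0 - α‖₊ ^ N * ‖β - α‖₊ = ‖e‖₊ := fun α hα => by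
    rw [zero_sub, nnnorm_neg]
    exact NNReal.eq (norm_pow_mul_norm_sub ((isRoot_of_mem_roots hα).dvd hdvd))
  have hprod : ‖p.eval 0‖₊ ^ N * ‖p.eval β‖₊ = ‖e‖₊ ^ p.natDegree := by
    rw [nnnorm_eval_eq_prod_roots hs hp, nnnorm_eval_eq_prod_roots hs hp, ← Multiset.prod_map_pow,
      ← Multiset.prod_map_mul, Multiset.map_congr rfl hroot, Multiset.map_const',
      Multiset.prod_replicate, hs.natDegree_eq_card_roots]
  exact congrArg NNReal.toReal hprod

end NormedField

section Complex

variable {N : ℕ} {β e : ℂ}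

lemma mahlerMeasure_sq_le (hN : N ≠ 0) :
    (harringtonPoly N β e).mahlerMeasure ^ 2 ≤ 1 + ‖β‖ ^ 2 + ‖e‖ ^ 2 := by
  have hsupp : (harringtonPoly N β e).support ⊆ {N + 1, N, 0} := fun k hk => by
    rw [mem_support_iff, coeff_eq] at hk
    contrapose! hk
    simp only [Finset.mem_insert, Finset.mem_singleton, not_or] at hk
    simp [hk]
  calc (harringtonPoly N β e).mahlerMeasure ^ 2
      ≤ ∑ k ∈ (harringtonPoly N β e).support, ‖(harringtonPoly N β e).coeff k‖ ^ 2 :=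
        Real.le_sqrt' (mahlerMeasure_pos_of_ne_zero monic.ne_zero) |>.1
          (mahlerMeasure_le_sqrt_sum_sq_norm_coeff _)
    _ ≤ ∑ k ∈ {N + 1, N, 0}, ‖(harringtonPoly N β e).coeff k‖ ^ 2 :=
        Finset.sum_le_sum_of_subset_of_nonneg hsupp fun _ _ _ => by positivity
    _ = 1 + ‖β‖ ^ 2 + ‖e‖ ^ 2 := by
        rw [Finset.sum_insert (by simp), Finset.sum_insert (by simpa using hN),
          Finset.sum_singleton]
        simp [coeff_eq, hN, hN.symm, add_assoc]

/-- This replaces Rouché's theorem: if `g` and `h` both had a root outside the disc of radius `r`,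
then `B ^ 2` would be at most the Mahler measure of `g * h`, against Landau's inequality. -/
lemma norm_roots_le_or_norm_roots_le {g h : ℂ[X]} (hg : g.Monic) (hh : h.Monic)
    (hgh : g * h = harringtonPoly N β e) (hN : N ≠ 0) {r B : ℝ}
    (hgap : ∀ t, r < t → t < B → ‖e‖ < t ^ N * (‖β‖ - t)) (hB₀ : 0 ≤ B)
    (hB : 1 + ‖β‖ ^ 2 + ‖e‖ ^ 2 < B ^ 4) :
    (∀ α ∈ g.roots, ‖α‖ ≤ r) ∨ ∀ α ∈ h.roots, ‖α‖ ≤ r := by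
  have large : ∀ p : ℂ[X], p.Monic → p ∣ harringtonPoly N β e →
      ∀ α ∈ p.roots, r < ‖α‖ → B ≤ p.mahlerMeasure := fun p hp hdvd α hα hr => by
    have hroot := isRoot_of_mem_roots hα
    have hle := norm_leadingCoeff_mul_norm_le_mahlerMeasure hroot
    rw [hp.leadingCoeff, norm_one, one_mul] at hle
    exact ((norm_le_or_le_norm_of_isRoot (hroot.dvd hdvd) hgap).resolve_left hr.not_ge).trans hle
  by_contra! hlarge
  obtain ⟨⟨α, hα, hαr⟩, ⟨γ, hγ, hγr⟩⟩ := hlarge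
  have hBg := large g hg (Dvd.intro h hgh) α hα hαr
  have hBh := large h hh (Dvd.intro_left g hgh) γ hγ hγr
  refine hB.not_ge ?_
  calc B ^ 4 = (B * B) ^ 2 := by ring
    _ ≤ (g.mahlerMeasure * h.mahlerMeasure) ^ 2 := by
        gcongr
        exact mahlerMeasure_nonneg g
    _ = (harringtonPoly N β e).mahlerMeasure ^ 2 := by rw [← mahlerMeasure_mul, hgh]
    _ ≤ 1 + ‖β‖ ^ 2 + ‖e‖ ^ 2 := mahlerMeasure_sq_le hN

end Complex

section Int

variable {N : ℕ} {β e : ℤ} {g h : ℤ[X]}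

lemma abs_pow_mul_abs_sub {m : ℤ} (hm : (harringtonPoly N β e).IsRoot m) :
    |m| ^ N * |β - m| = |e| := by
  rw [IsRoot, eval_eq] at hm
  rw [← abs_pow, ← abs_mul]
  congr 1
  linear_combination -hm

lemma abs_eval_dvd (hdvd : h ∣ harringtonPoly N β e) : |h.eval β| ∣ |e| := by
  simpa [eval_eq] using eval_dvd (x := β) hdvd

lemma map_dvd_complex (hdvd : h ∣ harringtonPoly N β e) :
    h.map (Int.castRingHom ℂ) ∣ harringtonPoly N (β : ℂ) e := by
  simpa only [map_eq, eq_intCast] using Polynomial.map_dvd (Int.castRingHom ℂ) hdvd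

lemma abs_eval_zero_pow_mul_abs_eval (hh : h.Monic) (hdvd : h ∣ harringtonPoly N β e) :
    |h.eval 0| ^ N * |h.eval β| = |e| ^ h.natDegree := by
  have hnorm := norm_eval_zero_pow_mul_norm_eval (IsAlgClosed.splits _)
    (hh.map (Int.castRingHom ℂ)) (map_dvd_complex hdvd)
  rw [← Int.cast_zero, norm_eval_map_intCast, norm_eval_map_intCast, hh.natDegree_map,
    Complex.norm_intCast] at hnorm
  exact_mod_cast hnorm

/-- The bound `(8 / 5) ^ deg h ≤ |h(β)| ≤ |e|` alone leaves open `deg h = 2` and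
`|e| = |h(β)| = 4`, when `|h(0)| ^ N` would be `4`. -/
lemma natDegree_le_one_of_eight_fifths_pow_le (hN : 3 ≤ N) (hh : h.Monic)
    (hdvd : h ∣ harringtonPoly N β e) (he : e ≠ 0) (hne : |e| ≠ 3) (hle : |e| ≤ 4)
    (hbound : (8 / 5 : ℝ) ^ h.natDegree ≤ |((h.eval β : ℤ) : ℝ)|) : h.natDegree ≤ 1 := by
  by_contra! hdeg
  have hval_dvd := abs_eval_dvd hdvd
  have hval_le : |h.eval β| ≤ |e| := Int.le_of_dvd (abs_pos.2 he) hval_dvd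
  have hval_gt : 2 < |h.eval β| := by
    have : (8 / 5 : ℝ) ^ 2 ≤ (8 / 5) ^ h.natDegree := pow_le_pow_right₀ (by norm_num) hdeg
    have : (2 : ℝ) < |((h.eval β : ℤ) : ℝ)| := by linarith
    exact_mod_cast this
  have he4 : |e| = 4 := by
    by_contra
    omega
  have hval : |h.eval β| = 4 := by
    have : |h.eval β| ≠ 3 := fun h3 => by
      rw [h3, he4] at hval_dvd
      omega
    omega
  have hdeg2 : h.natDegree = 2 := by
    by_contra
    have hpow : (8 / 5 : ℝ) ^ 3 ≤ (8 / 5) ^ h.natDegree :=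
      pow_le_pow_right₀ (by norm_num) (by omega)
    have hval' : |((h.eval β : ℤ) : ℝ)| = 4 := by exact_mod_cast hval
    linarith
  have hconst : |h.eval 0| ^ N = 4 := by
    have := abs_eval_zero_pow_mul_abs_eval hh hdvd
    rw [hval, he4, hdeg2] at this
    linarith
  rcases le_or_gt |h.eval 0| 1 with hle_one | hgt_one
  · linarith [pow_le_one₀ (n := N) (abs_nonneg (h.eval 0)) hle_one]
  · have : 2 ^ 3 ≤ |h.eval 0| ^ N :=
      (pow_le_pow_left₀ zero_le_two hgt_one 3).trans (pow_le_pow_right₀ hgt_one.le hN)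
    linarith

lemma natDegree_le_one_of_norm_roots_le_seven_fifths (hN : 3 ≤ N) (hh : h.Monic)
    (hdvd : h ∣ harringtonPoly N β e) (hβ : 3 ≤ |β|) (he : e ≠ 0) (hne : |e| ≠ |β|)
    (hle : |e| ≤ 2 * (|β| - 1))
    (hroots : ∀ α ∈ (h.map (Int.castRingHom ℂ)).roots, ‖α‖ ≤ 7 / 5) : h.natDegree ≤ 1 := by
  have hβR : (3 : ℝ) ≤ |(β : ℝ)| := by exact_mod_cast hβ
  have hbound : (|(β : ℝ)| - 7 / 5) ^ h.natDegree ≤ |((h.eval β : ℤ) : ℝ)| := by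
    have := norm_sub_pow_natDegree_le_norm_eval (x := (β : ℂ)) (IsAlgClosed.splits _)
      (hh.map (Int.castRingHom ℂ)) (by rw [Complex.norm_intCast]; linarith) hroots
    rwa [norm_eval_map_intCast, hh.natDegree_map, Complex.norm_intCast] at this
  rcases hβ.eq_or_lt with hβ3 | hβ4
  · refine natDegree_le_one_of_eight_fifths_pow_le hN hh hdvd he (by omega) (by omega) ?_
    have hβ3R : |(β : ℝ)| = 3 := by exact_mod_cast hβ3.symm
    rw [hβ3R] at hbound
    convert hbound using 2
    norm_num
  · by_contra! hdeg
    have hβ4R : (4 : ℝ) ≤ |(β : ℝ)| := by exact_mod_cast hβ4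
    have hpow : (|(β : ℝ)| - 7 / 5) ^ 2 ≤ (|(β : ℝ)| - 7 / 5) ^ h.natDegree :=
      pow_le_pow_right₀ (by linarith) hdeg
    have hval : |((h.eval β : ℤ) : ℝ)| ≤ 2 * (|(β : ℝ)| - 1) := by
      exact_mod_cast (Int.le_of_dvd (abs_pos.2 he) (abs_eval_dvd hdvd)).trans hle
    nlinarith

/-- The discs `‖α‖ ≤ 1` and `‖β - α‖ ≤ 1` touch in the single point `β / 2`, so a factor of degree
at least two would have `β / 2` as a multiple root. -/
lemma natDegree_le_one_of_norm_roots_le_one (hN : N ≠ 1) (hh : h.Monic)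
    (hdvd : h ∣ harringtonPoly N β e) (hβ : |β| = 2) (he : |e| = 1)
    (hroots : ∀ α ∈ (h.map (Int.castRingHom ℂ)).roots, ‖α‖ ≤ 1) : h.natDegree ≤ 1 := by
  have hβnorm : ‖(β : ℂ)‖ = 2 := by
    rw [Complex.norm_intCast]
    exact_mod_cast hβ
  have hβ0 : (β : ℂ) ≠ 0 := norm_ne_zero_iff.1 (by rw [hβnorm]; exact two_ne_zero)
  have hfar : ∀ α ∈ (h.map (Int.castRingHom ℂ)).roots, 1 ≤ ‖(β : ℂ) - α‖ := fun α hα => by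
    linarith [norm_sub_norm_le (β : ℂ) α, hroots α hα]
  have hval : ‖(h.map (Int.castRingHom ℂ)).eval (β : ℂ)‖ ≤ 1 := by
    rw [norm_eval_map_intCast]
    exact_mod_cast Int.le_of_dvd one_pos (he ▸ abs_eval_dvd hdvd)
  have hhalf : ∀ α ∈ (h.map (Int.castRingHom ℂ)).roots, α = β / 2 := fun α hα => by
    have hnear : ‖(β : ℂ) - α‖ ≤ 1 :=
      (norm_sub_le_norm_eval (IsAlgClosed.splits _) (hh.map _) hfar hα).trans hval
    have htri : ‖(β : ℂ)‖ ≤ ‖α‖ + ‖(β : ℂ) - α‖ := by simpa using norm_add_le α ((β : ℂ) - α)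
    have heq : α = β - α := eq_of_norm_eq_of_norm_add_eq
      (by linarith [hroots α hα, hfar α hα])
      (by rw [add_sub_cancel]; linarith [hroots α hα])
    linear_combination heq / 2
  by_contra! hdeg
  have hsq : (X - C (β / 2 : ℂ)) ^ 2 ∣ harringtonPoly N (β : ℂ) e := by
    refine (pow_dvd_pow _ hdeg).trans ?_
    rw [← hh.natDegree_map (Int.castRingHom ℂ),
      ← eq_X_sub_C_pow_natDegree (IsAlgClosed.splits _) (hh.map _) hhalf]
    exact map_dvd_complex hdvd
  have hNβ := mul_eq_of_X_sub_C_sq_dvd (div_ne_zero hβ0 two_ne_zero) hsq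
  have hN1 : (N : ℂ) = 1 := mul_right_cancel₀ hβ0 (by linear_combination -2 * hNβ)
  exact hN (by exact_mod_cast hN1)

lemma norm_roots_map_le_or_norm_roots_map_le (hg : g.Monic) (hh : h.Monic)
    (hgh : g * h = harringtonPoly N β e) (hN : N ≠ 0) {r B : ℝ}
    (hgap : ∀ t, r < t → t < B → |(e : ℝ)| < t ^ N * (|(β : ℝ)| - t)) (hB₀ : 0 ≤ B)
    (hB : 1 + |(β : ℝ)| ^ 2 + |(e : ℝ)| ^ 2 < B ^ 4) :
    (∀ α ∈ (g.map (Int.castRingHom ℂ)).roots, ‖α‖ ≤ r) ∨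
      ∀ α ∈ (h.map (Int.castRingHom ℂ)).roots, ‖α‖ ≤ r := by
  simp only [← Complex.norm_intCast] at hgap hB
  refine norm_roots_le_or_norm_roots_le (hg.map _) (hh.map _) ?_ hN hgap hB₀ hB
  rw [← Polynomial.map_mul, hgh, map_eq, eq_intCast, eq_intCast]

lemma natDegree_le_one_or_natDegree_le_one (hg : g.Monic) (hh : h.Monic)
    (hgh : g * h = harringtonPoly N β e) (hβ : 2 ≤ |β|) (he : e ≠ 0) (hne : |e| ≠ |β|)
    (hle : |e| ≤ 2 * (|β| - 1)) : g.natDegree ≤ 1 ∨ h.natDegree ≤ 1 := by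
  rcases lt_or_ge N 3 with hN | hN
  · have := natDegree_add_natDegree_eq hg hh hgh
    omega
  have hgdvd : g ∣ harringtonPoly N β e := Dvd.intro h hgh
  have hhdvd : h ∣ harringtonPoly N β e := Dvd.intro_left g hgh
  rcases hβ.eq_or_lt with hβ2 | hβ3
  · have he1 : |e| = 1 := by have := abs_pos.2 he; omega
    have hβR : |(β : ℝ)| = 2 := by exact_mod_cast hβ2.symm
    have heR : |(e : ℝ)| = 1 := by exact_mod_cast he1
    refine (norm_roots_map_le_or_norm_roots_map_le (r := 1) (B := 8 / 5) hg hh hgh (by omega)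
      ?_ (by norm_num) ?_).imp
      (natDegree_le_one_of_norm_roots_le_one (by omega) hg hgdvd hβ2.symm he1)
      (natDegree_le_one_of_norm_roots_le_one (by omega) hh hhdvd hβ2.symm he1)
    · rw [hβR, heR]
      exact fun t => one_lt_pow_mul_two_sub hN
    · rw [hβR, heR]
      norm_num
  · have hβR : 3 ≤ |(β : ℝ)| := by exact_mod_cast hβ3
    have hleR : |(e : ℝ)| ≤ 2 * (|(β : ℝ)| - 1) := by exact_mod_cast hle
    refine (norm_roots_map_le_or_norm_roots_map_le (r := 7 / 5) (B := |(β : ℝ)| - 1 / 2) hg hh hgh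
      (by omega) (fun t => lt_pow_mul_sub_of_three_le hN hβR hleR) (by linarith) ?_).imp
      (natDegree_le_one_of_norm_roots_le_seven_fifths hN hg hgdvd hβ3 he hne hle)
      (natDegree_le_one_of_norm_roots_le_seven_fifths hN hh hhdvd hβ3 he hne hle)
    have hesq : |(e : ℝ)| ^ 2 ≤ (2 * (|(β : ℝ)| - 1)) ^ 2 := by gcongr
    have hsq : (5 / 2) * (|(β : ℝ)| - 1 / 2) ≤ (|(β : ℝ)| - 1 / 2) ^ 2 := by nlinarith
    nlinarith

lemma abs_eq_one_of_isRoot {m : ℤ} (hN : 2 ≤ N) (he : e ≠ 0) (hle : |e| ≤ 2 * (|β| - 1))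
    (hNβ : N = 2 → |β| ≠ 3) (hm : (harringtonPoly N β e).IsRoot m) : |m| = 1 := by
  have hmul := abs_pow_mul_abs_sub hm
  have hpos : 0 < |m| ^ N * |β - m| := hmul ▸ abs_pos.2 he
  have hsub : 0 < |β - m| := pos_of_mul_pos_right hpos (by positivity)
  have hm0 : 0 < |m| := by
    refine (abs_nonneg m).lt_of_ne' fun h0 => ?_
    simp [h0, show N ≠ 0 by omega] at hpos
  have htri : |β| ≤ |m| + |β - m| := by simpa using abs_add_le m (β - m)
  by_contra hm1
  have hpow_le : |m| ^ N * |β - m| ≤ 2 * (|m| + |β - m| - 1) := by linarith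
  obtain ⟨hN2, hm2, hsub1⟩ :=
    eq_two_and_eq_two_and_eq_one_of_pow_mul_le hN (by omega) hsub hpow_le
  rw [hN2, hm2, hsub1] at hmul
  exact hNβ hN2 (by omega)

lemma not_X_sub_C_mul_X_sub_C_dvd {m m' : ℤ} (hN : 2 ≤ N) (hβ : 2 ≤ |β|) (hm : |m| = 1)
    (hm' : |m'| = 1) : ¬ (X - C m) * (X - C m') ∣ harringtonPoly N β e := by
  intro hdvd
  obtain rfl | hne := eq_or_ne m m'
  · have hm0 : m ≠ 0 := abs_pos.1 (hm ▸ one_pos)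
    have heq := mul_eq_of_X_sub_C_sq_dvd hm0 (sq (X - C m) ▸ hdvd)
    have habs : ((N : ℤ) + 1) * |m| = N * |β| := by
      rw [← Nat.abs_cast N, ← abs_mul, ← heq, abs_mul, Nat.abs_cast]
      congr 1
    rw [hm] at habs
    nlinarith
  · have hroot {a : ℤ} (ha : |a| = 1) (hdvd : X - C a ∣ harringtonPoly N β e) :
        |β - a| = |e| := by
      simpa [ha] using abs_pow_mul_abs_sub (dvd_iff_isRoot.1 hdvd)
    have hdist := (hroot hm ((dvd_mul_right _ _).trans hdvd)).trans
      (hroot hm' ((dvd_mul_left _ _).trans hdvd)).symm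
    rcases abs_eq_abs.1 hdist with hsub | hsub
    · exact hne (sub_right_injective hsub)
    · have htwo : 2 * |β| = |m + m'| := by
        rw [← abs_two (α := ℤ), ← abs_mul]
        congr 1
        linear_combination hsub
      linarith [abs_add_le m m']

lemma exists_eq_X_sub_C_of_dvd (hN : 2 ≤ N) (he : e ≠ 0) (hle : |e| ≤ 2 * (|β| - 1))
    (hNβ : N = 2 → |β| ≠ 3) (hh : h.Monic) (hdvd : h ∣ harringtonPoly N β e)
    (hdeg : h.natDegree = 1) : ∃ m : ℤ, |m| = 1 ∧ h = X - C m := by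
  obtain ⟨a, rfl⟩ : ∃ a, h = X - C a :=
    ⟨-h.coeff 0, by rw [C_neg, sub_neg_eq_add]; exact hh.eq_X_add_C hdeg⟩
  exact ⟨a, abs_eq_one_of_isRoot hN he hle hNβ (dvd_iff_isRoot.1 hdvd), rfl⟩

lemma irreducible_of_X_sub_C_mul_eq {m : ℤ} (hN : 2 ≤ N) (hβ : 2 ≤ |β|) (he : e ≠ 0)
    (hne : |e| ≠ |β|) (hle : |e| ≤ 2 * (|β| - 1)) (hNβ : N = 2 → |β| ≠ 3) (hm : |m| = 1)
    (hg : g.Monic) (hmg : (X - C m) * g = harringtonPoly N β e) : Irreducible g := by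
  have hgdeg := natDegree_add_natDegree_eq (monic_X_sub_C m) hg hmg
  rw [natDegree_X_sub_C] at hgdeg
  have degree_ne_one {p q : ℤ[X]} (hp : p.Monic) (hpq : p * q = g) : p.natDegree ≠ 1 := by
    intro hdeg
    obtain ⟨m', hm', rfl⟩ := exists_eq_X_sub_C_of_dvd hN he hle hNβ hp
      ((Dvd.intro q hpq).trans (Dvd.intro_left _ hmg)) hdeg
    exact not_X_sub_C_mul_X_sub_C_dvd hN hβ hm hm'
      (hmg ▸ mul_dvd_mul_left _ (Dvd.intro q hpq))
  have hg1 : g ≠ 1 := by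
    rintro rfl
    rw [natDegree_one] at hgdeg
    omega
  refine hg.irreducible_iff_natDegree.2 ⟨hg1, fun p q hp hq hpq => ?_⟩
  have hpne := degree_ne_one hp hpq
  have hqne := degree_ne_one hq (by rw [mul_comm, hpq])
  have hsmall := natDegree_le_one_or_natDegree_le_one hp ((monic_X_sub_C m).mul hq)
    (by rw [← hmg, ← hpq]; ring) hβ he hne hle
  rw [(monic_X_sub_C m).natDegree_mul hq, natDegree_X_sub_C] at hsmall
  omega

lemma exists_monic_X_sub_C_mul_eq (hN : 2 ≤ N) (hβ : 2 ≤ |β|) (he : e ≠ 0) (hne : |e| ≠ |β|)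
    (hle : |e| ≤ 2 * (|β| - 1)) (hNβ : N = 2 → |β| ≠ 3)
    (hred : ¬ Irreducible (harringtonPoly N β e)) :
    ∃ (m : ℤ) (g : ℤ[X]), |m| = 1 ∧ g.Monic ∧ (X - C m) * g = harringtonPoly N β e := by
  have hone : harringtonPoly N β e ≠ 1 := fun h => by
    simpa [natDegree_eq] using congrArg natDegree h
  rw [monic.irreducible_iff_natDegree, and_iff_right hone] at hred
  push Not at hred
  obtain ⟨p, q, hp, hq, hpq, hp0, hq0⟩ := hred
  rcases natDegree_le_one_or_natDegree_le_one hp hq hpq hβ he hne hle with hdeg | hdeg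
  · obtain ⟨m, hm, rfl⟩ :=
      exists_eq_X_sub_C_of_dvd hN he hle hNβ hp (Dvd.intro q hpq) (by omega)
    exact ⟨m, q, hm, hq, hpq⟩
  · obtain ⟨m, hm, rfl⟩ :=
      exists_eq_X_sub_C_of_dvd hN he hle hNβ hq (Dvd.intro_left p hpq) (by omega)
    exact ⟨m, p, hm, hp, by rw [mul_comm, hpq]⟩

lemma exists_eq_X_sub_C_mul_of_not_irreducible (hN : 2 ≤ N) (hβ : 2 ≤ |β|) (he : e ≠ 0)
    (hne : |e| ≠ |β|) (hle : |e| ≤ 2 * (|β| - 1)) (hNβ : N = 2 → |β| ≠ 3)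
    (hred : ¬ Irreducible (harringtonPoly N β e)) :
    ∃ (m : ℤ) (g : ℤ[X]), (m = 1 ∨ m = -1) ∧ harringtonPoly N β e = (X - C m) * g ∧
      Irreducible g ∧ ¬ IsReciprocal g := by
  obtain ⟨m, g, hm, hg, hmg⟩ := exists_monic_X_sub_C_mul_eq hN hβ he hne hle hNβ hred
  have hm1 : m = 1 ∨ m = -1 := eq_or_eq_neg_of_abs_eq hm
  have hirr : Irreducible g := irreducible_of_X_sub_C_mul_eq hN hβ he hne hle hNβ hm hg hmg
  have hrec : ¬ IsReciprocal g := fun hrec => by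
    have hF := (isReciprocal_X_sub_C hm1).mul hrec
    rw [hmg] at hF
    exact not_isReciprocal hN (abs_pos.1 (by omega)) hF
  exact ⟨m, g, hm1, hmg.symm, hirr, hrec⟩

end Int

end harringtonPoly

/-- Harrington's theorem on trinomials `X^n + bε₁X^{n-1} + cε₂`. -/
theorem harrington_trinomial (n b c : ℕ) (hn : 3 ≤ n) (hb : 2 ≤ b) (hc : 0 < c)
    (hnb : n * b ≠ 9) (hbc : b ≠ c) (hcb : c ≤ 2 * (b - 1))
    (ε₁ ε₂ : ℤ) (hε₁ : ε₁ = 1 ∨ ε₁ = -1) (hε₂ : ε₂ = 1 ∨ ε₂ = -1)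
    (hred : ¬ Irreducible
      ((X : Polynomial ℤ) ^ n + C ((b : ℤ) * ε₁) * X ^ (n - 1) + C ((c : ℤ) * ε₂))) :
    ∃ (δ : ℤ) (g : Polynomial ℤ), (δ = 1 ∨ δ = -1) ∧
      (X : Polynomial ℤ) ^ n + C ((b : ℤ) * ε₁) * X ^ (n - 1) + C ((c : ℤ) * ε₂) =
        (X + C δ) * g ∧
      Irreducible g ∧ g.reverse ≠ g ∧ g.reverse ≠ -g := by
  obtain ⟨N, rfl⟩ : ∃ N, n = N + 1 := ⟨n - 1, by omega⟩
  have htrinomial : X ^ (N + 1) + C ((b : ℤ) * ε₁) * X ^ (N + 1 - 1) + C ((c : ℤ) * ε₂) =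
      harringtonPoly N (-(b * ε₁)) (c * ε₂) := by
    rw [harringtonPoly, Nat.add_sub_cancel, C_neg]
    ring
  have hβ : |-((b : ℤ) * ε₁)| = b := by rcases hε₁ with rfl | rfl <;> simp
  have he : |(c : ℤ) * ε₂| = c := by rcases hε₂ with rfl | rfl <;> simp
  rw [htrinomial] at hred ⊢
  obtain ⟨m, g, hm, hmg, hirr, hrec⟩ := harringtonPoly.exists_eq_X_sub_C_mul_of_not_irreducible
    (by omega) (by omega) (abs_pos.1 (by omega)) (by omega) (by omega)
    (by rintro rfl h3; omega) hred
  refine ⟨-m, g, ?_, by rw [C_neg, ← sub_eq_add_neg, hmg], hirr, not_or.1 hrec⟩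
  rcases hm with rfl | rfl <;> simp
end

section
/- Let K be a field of characteristic different from 2, let b, c be positive integers, m ≥ 1, and ε₁, ε₂ ∈ {−1, +1}. The polynomial X^{2m} + b·ε₁·X^m + c·ε₂ ∈ K[X] (with b, c interpreted via the canonical map ℕ → K) is reducible over K if and only if at least one of the following holds: (i) b² − 4cε₂ is a square in K; (ii) there is a prime p dividing m such that X^{2p} + b·ε₁·X^p + c·ε₂ is reducible over K; (iii) 4 ∣ m and X^8 + b·ε₁·X^4 + c·ε₂ is reducible over K. -/
open Polynomial

/-!
If `f` is a monic irreducible polynomial with root `x`, then `f(Xᵈ)` is irreducible over `K` exactly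
when `Xᵈ - x` is irreducible over `K(x)`. Hence a criterion that deduces the irreducibility of
`Xᵐ - a`, over any field, from that of `Xᵈ - a` for certain divisors `d` of `m` carries over to
`f(Xᵐ)`. By the Vahlen–Capelli theorem, the prime divisors of `m`, together with `4` when `4 ∣ m`,
suffice.

For exponents `2ᵏ` this comes from norms down quadratic towers. If `x² = a`, then `x` and `-x` have
norm `-a`, so when neither `a` nor `-a` is a square, neither is `x` or `-x` in `K(x)`, and one can
iterate. If only `X⁴ - a` is known to be irreducible, the hypothesis is recovered after one step:
were `-x` a square in `K(x)`, then `-a` would be one in `K`, hence `-1` in `K(x)`, hence `x`.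
-/

universe u

section

open IntermediateField

variable {K : Type u} [Field K]

theorem natDegree_le_finrank_of_irreducible_of_aeval_eq_zero {L : Type*} [Field L] [Algebra K L]
    [FiniteDimensional K L] {p : K[X]} {y : L} (hp : Irreducible p) (hy : aeval y p = 0) :
    p.natDegree ≤ Module.finrank K L := by
  have hdvd : p ∣ minpoly K y := (hp.dvd_iff_aeval_eq_zero hy).mp (minpoly.aeval K y)
  exact (natDegree_le_of_dvd hdvd (minpoly.ne_zero (.of_finite K y))).trans (minpoly.natDegree_le y)

theorem irreducible_map_sub_C_of_irreducible_comp {L : Type*} [Field L] [Algebra K L]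
    [FiniteDimensional K L] {f g : K[X]} {x : L} (hx : aeval x f = 0)
    (hf : f.natDegree = Module.finrank K L) (h : Irreducible (f.comp g)) :
    Irreducible (g.map (algebraMap K L) - C x) := by
  have hgpos : 0 < g.natDegree :=
    Nat.pos_of_mul_pos_left (natDegree_comp (p := f) ▸ h.natDegree_pos)
  set q := g.map (algebraMap K L) - C x
  have hq : q.natDegree = g.natDegree := by rw [natDegree_sub_C, natDegree_map]
  have hq0 : q ≠ 0 := ne_zero_of_natDegree_gt (hq ▸ hgpos)
  obtain ⟨r, hr, hrq⟩ := WfDvdMonoid.exists_irreducible_factor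
    (not_isUnit_of_natDegree_pos q (hq ▸ hgpos)) hq0
  suffices g.natDegree ≤ r.natDegree from
    (associated_of_dvd_of_natDegree_le hrq hq0 (hq ▸ this)).irreducible hr
  have := Fact.mk hr
  have : FiniteDimensional L (AdjoinRoot r) := (AdjoinRoot.powerBasis hr.ne_zero).finite
  have : FiniteDimensional K (AdjoinRoot r) := .trans K L (AdjoinRoot r)
  set y := AdjoinRoot.root r
  have hgy : aeval y g = algebraMap L (AdjoinRoot r) x := by
    have hqy : aeval y q = 0 := aeval_eq_zero_of_dvd_aeval_eq_zero hrq (AdjoinRoot.eval₂_root r)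
    simpa only [q, map_sub, aeval_map_algebraMap, aeval_C, sub_eq_zero] using hqy
  have hy : aeval y (f.comp g) = 0 := by
    rw [aeval_comp, hgy, aeval_algebraMap_apply, hx, map_zero]
  refine Nat.le_of_mul_le_mul_left ?_ (Module.finrank_pos (R := K) (M := L))
  calc Module.finrank K L * g.natDegree
      = (f.comp g).natDegree := by rw [natDegree_comp, hf]
    _ ≤ Module.finrank K (AdjoinRoot r) := natDegree_le_finrank_of_irreducible_of_aeval_eq_zero h hy
    _ = Module.finrank K L * r.natDegree := by
      rw [← Module.finrank_mul_finrank K L, (AdjoinRoot.powerBasis hr.ne_zero).finrank,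
        AdjoinRoot.powerBasis_dim]

theorem X_pow_sub_C_gen_irreducible_of_irreducible_expand {E : Type*} [Field E] [Algebra K E]
    {x : E} {d : ℕ} (h : Irreducible (expand K d (minpoly K x))) :
    Irreducible (X ^ d - C (AdjoinSimple.gen K x)) := by
  have hx : IsIntegral K x := by
    rw [← minpoly.ne_zero_iff]
    intro h0
    simp [h0] at h
  have : FiniteDimensional K K⟮x⟯ := adjoin.finiteDimensional hx
  rw [expand_eq_comp_X_pow] at h
  simpa using irreducible_map_sub_C_of_irreducible_comp (aeval_gen_minpoly K x)
    (adjoin.finrank hx).symm h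

section

variable {E : Type*} [Field E] [Algebra K E] {x : E} {a : K}

theorem isIntegral_of_minpoly_eq_X_pow_sub_C {n : ℕ} (hn : n ≠ 0)
    (hx : minpoly K x = X ^ n - C a) : IsIntegral K x :=
  minpoly.ne_zero_iff.mp (hx ▸ (monic_X_pow_sub_C a hn).ne_zero)

theorem norm_gen_of_minpoly_eq_X_pow_sub_C {n : ℕ} (hn : n ≠ 0)
    (hx : minpoly K x = X ^ n - C a) :
    Algebra.norm K (AdjoinSimple.gen K x) = (-1) ^ (n + 1) * a := by
  have hint := isIntegral_of_minpoly_eq_X_pow_sub_C hn hx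
  rw [← adjoin.powerBasis_gen hint, Algebra.PowerBasis.norm_gen_eq_coeff_zero_minpoly]
  simp [minpoly_gen, hx, hn.symm, pow_succ]

theorem gen_sq_of_minpoly_eq_X_sq_sub_C (hx : minpoly K x = X ^ 2 - C a) :
    AdjoinSimple.gen K x ^ 2 = algebraMap K K⟮x⟯ a := by
  simpa [hx, sub_eq_zero] using aeval_gen_minpoly K x

theorem isSquare_neg_of_isSquare_gen (hx : minpoly K x = X ^ 2 - C a)
    (h : IsSquare (AdjoinSimple.gen K x)) : IsSquare (-a) := by
  have hnorm : Algebra.norm K (AdjoinSimple.gen K x) = -a := by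
    rw [norm_gen_of_minpoly_eq_X_pow_sub_C two_ne_zero hx]
    ring
  exact hnorm ▸ h.map (Algebra.norm K)

theorem isSquare_neg_of_isSquare_neg_gen (hx : minpoly K x = X ^ 2 - C a)
    (h : IsSquare (-AdjoinSimple.gen K x)) : IsSquare (-a) := by
  have hfinrank : Module.finrank K K⟮x⟯ = 2 := by
    rw [adjoin.finrank (isIntegral_of_minpoly_eq_X_pow_sub_C two_ne_zero hx), hx,
      natDegree_X_pow_sub_C]
  have hnorm : Algebra.norm K (-AdjoinSimple.gen K x) = -a := by
    rw [← neg_one_mul, map_mul, ← map_one (algebraMap K K⟮x⟯), ← map_neg, Algebra.norm_algebraMap,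
      hfinrank, norm_gen_of_minpoly_eq_X_pow_sub_C two_ne_zero hx]
    ring
  exact hnorm ▸ h.map (Algebra.norm K)

theorem isSquare_gen_of_isSquare_neg_gen (hx : minpoly K x = X ^ 2 - C a)
    (h : IsSquare (-AdjoinSimple.gen K x)) : IsSquare (AdjoinSimple.gen K x) := by
  obtain ⟨s, hs⟩ : IsSquare (-AdjoinSimple.gen K x ^ 2) := by
    rw [gen_sq_of_minpoly_eq_X_sq_sub_C hx, ← map_neg]
    exact (isSquare_neg_of_isSquare_neg_gen hx h).map (algebraMap K K⟮x⟯)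
  rcases eq_or_ne (AdjoinSimple.gen K x) 0 with h0 | h0
  · exact h0 ▸ .zero
  have hneg_one : IsSquare (-1 : K⟮x⟯) := by
    refine ⟨s / AdjoinSimple.gen K x, ?_⟩
    field_simp
    linear_combination hs
  simpa using hneg_one.mul h

end

theorem X_sq_sub_C_irreducible_iff {a : K} : Irreducible (X ^ 2 - C a) ↔ ¬ IsSquare a := by
  rw [X_pow_sub_C_irreducible_iff_of_prime Nat.prime_two, isSquare_iff_exists_sq, not_exists]
  simp only [ne_eq, eq_comm]

theorem X_pow_two_pow_sub_C_irreducible {a : K} (ha : ¬ IsSquare a) (hneg : ¬ IsSquare (-a))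
    (k : ℕ) : Irreducible (X ^ 2 ^ k - C a) := by
  induction k generalizing K with
  | zero => simpa using irreducible_X_sub_C a
  | succ k ih =>
    rw [pow_succ]
    refine X_pow_mul_sub_C_irreducible (X_sq_sub_C_irreducible_iff.mpr ha) fun E _ _ x hx ↦ ?_
    exact ih (mt (isSquare_neg_of_isSquare_gen hx) hneg)
      (mt (isSquare_neg_of_isSquare_neg_gen hx) hneg)

theorem X_pow_two_pow_sub_C_irreducible_of_X_pow_four_sub_C {a : K}
    (h : Irreducible (X ^ 4 - C a)) (k : ℕ) : Irreducible (X ^ 2 ^ k - C a) := by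
  have hexpand : X ^ 4 - C a = expand K 2 (X ^ 2 - C a) := by simp [← pow_mul]
  rw [hexpand] at h
  cases k with
  | zero => simpa using irreducible_X_sub_C a
  | succ k =>
    rw [pow_succ]
    refine X_pow_mul_sub_C_irreducible (of_irreducible_expand two_ne_zero h) fun E _ _ x hx ↦ ?_
    have hgen : ¬ IsSquare (AdjoinSimple.gen K x) := by
      rw [← hx] at h
      exact X_sq_sub_C_irreducible_iff.mp (X_pow_sub_C_gen_irreducible_of_irreducible_expand h)
    exact X_pow_two_pow_sub_C_irreducible hgen (mt (isSquare_gen_of_isSquare_neg_gen hx) hgen) k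

theorem X_pow_mul_sub_C_irreducible_of_odd {a : K} {n r : ℕ} (hn : Irreducible (X ^ n - C a))
    (hr : Odd r) (hp : ∀ p : ℕ, p.Prime → p ∣ r → Irreducible (X ^ p - C a)) :
    Irreducible (X ^ (r * n) - C a) := by
  refine X_pow_mul_sub_C_irreducible hn fun E _ _ x hx ↦
    X_pow_sub_C_irreducible_of_odd hr fun p hprime hpr y hy ↦ ?_
  have hnorm : Algebra.norm K y ^ p = (-1) ^ (n + 1) * a := by
    rw [← map_pow, hy,
      norm_gen_of_minpoly_eq_X_pow_sub_C (ne_zero_of_irreducible_X_pow_sub_C hn) hx]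
  have hpow_ne := pow_ne_of_irreducible_X_pow_sub_C (hp p hprime hpr) dvd_rfl hprime.ne_one
  rcases neg_one_pow_eq_or K (n + 1) with hsign | hsign <;> rw [hsign] at hnorm
  · exact hpow_ne _ (hnorm.trans (one_mul a))
  · refine hpow_ne (-Algebra.norm K y) ?_
    rw [(hr.of_dvd_nat hpr).neg_pow, hnorm, neg_one_mul, neg_neg]

theorem X_pow_sub_C_irreducible_of_forall_prime_of_four {a : K} {n : ℕ} (hn : n ≠ 0)
    (hp : ∀ p : ℕ, p.Prime → p ∣ n → Irreducible (X ^ p - C a))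
    (h4 : 4 ∣ n → Irreducible (X ^ 4 - C a)) : Irreducible (X ^ n - C a) := by
  obtain ⟨k, r, hr, rfl⟩ := Nat.exists_eq_two_pow_mul_odd hn
  have htwo : Irreducible (X ^ 2 ^ k - C a) := by
    match k with
    | 0 => simpa using irreducible_X_sub_C a
    | 1 => simpa using hp 2 Nat.prime_two (by simp)
    | k + 2 =>
      have hdvd : 4 ∣ 2 ^ (k + 2) * r := ⟨2 ^ k * r, by ring⟩
      exact X_pow_two_pow_sub_C_irreducible_of_X_pow_four_sub_C (h4 hdvd) (k + 2)
  rw [mul_comm]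
  exact X_pow_mul_sub_C_irreducible_of_odd htwo hr fun p hprime hpr ↦
    hp p hprime (hpr.mul_left _)

theorem irreducible_expand_of_dvd {R : Type*} [CommRing R] [IsDomain R] {f : R[X]} {d m : ℕ}
    (hm : m ≠ 0) (hd : d ∣ m) (h : Irreducible (expand R m f)) : Irreducible (expand R d f) := by
  obtain ⟨e, rfl⟩ := hd
  rw [mul_comm, expand_mul] at h
  exact of_irreducible_expand (right_ne_zero_of_mul hm) h

theorem irreducible_expand_iff {f : K[X]} (hf : f.Monic) {m : ℕ} (hm : m ≠ 0) :
    Irreducible (expand K m f) ↔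
      Irreducible f ∧ (∀ p : ℕ, p.Prime → p ∣ m → Irreducible (expand K p f)) ∧
        (4 ∣ m → Irreducible (expand K 4 f)) := by
  constructor
  · exact fun h ↦ ⟨of_irreducible_expand hm h, fun p _ hpm ↦ irreducible_expand_of_dvd hm hpm h,
      fun h4 ↦ irreducible_expand_of_dvd hm h4 h⟩
  · rintro ⟨hirr, hp, h4⟩
    rw [expand_eq_comp_X_pow]
    refine irreducible_comp hf (monic_X_pow m) hirr ?_
    rintro E _ _ x rfl
    rw [Polynomial.map_pow, map_X]
    exact X_pow_sub_C_irreducible_of_forall_prime_of_four hm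
      (fun p hprime hpm ↦ X_pow_sub_C_gen_irreducible_of_irreducible_expand (hp p hprime hpm))
      (fun hdvd ↦ X_pow_sub_C_gen_irreducible_of_irreducible_expand (h4 hdvd))

theorem irreducible_quadratic_iff [NeZero (2 : K)] {a b c : K} (ha : a ≠ 0) :
    Irreducible (C a * X ^ 2 + C b * X + C c) ↔ ¬ IsSquare (discrim a b c) := by
  have hdeg : (C a * X ^ 2 + C b * X + C c).natDegree = 2 := natDegree_quadratic ha
  have hne : C a * X ^ 2 + C b * X + C c ≠ 0 := ne_zero_of_natDegree_gt (hdeg ▸ two_pos)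
  rw [irreducible_iff_roots_eq_zero_of_degree_le_three hdeg.ge (by lia),
    Multiset.eq_zero_iff_forall_notMem, ← not_exists, not_iff_not]
  simp only [mem_roots hne, IsRoot.def, eval_add, eval_mul, eval_pow, eval_C, eval_X]
  simp only [sq]
  refine ⟨fun ⟨x, hx⟩ ↦ ?_, exists_quadratic_eq_zero ha⟩
  exact (isSquare_iff_exists_sq _).mpr ⟨_, discrim_eq_sq_of_quadratic_eq_zero hx⟩

theorem schinzel_quadratic_in_xm_general (hchar : ringChar K ≠ 2) (b c : K) {m : ℕ} (hm : m ≠ 0) :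
    ¬ Irreducible (X ^ (2 * m) + C b * X ^ m + C c) ↔
      (∃ x : K, b ^ 2 - 4 * c = x ^ 2) ∨
      (∃ p : ℕ, p.Prime ∧ p ∣ m ∧ ¬ Irreducible (X ^ (2 * p) + C b * X ^ p + C c)) ∨
      (4 ∣ m ∧ ¬ Irreducible (X ^ 8 + C b * X ^ 4 + C c)) := by
  have : NeZero (2 : K) := ⟨Ring.two_ne_zero hchar⟩
  have hmonic : (X ^ 2 + C b * X + C c).Monic := by monicity!
  have hquadratic : Irreducible (X ^ 2 + C b * X + C c) ↔ ¬ ∃ x : K, b ^ 2 - 4 * c = x ^ 2 := by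
    simpa [discrim, isSquare_iff_exists_sq] using
      irreducible_quadratic_iff (b := b) (c := c) (one_ne_zero' K)
  have hexpand (d : ℕ) :
      X ^ (2 * d) + C b * X ^ d + C c = expand K d (X ^ 2 + C b * X + C c) := by
    simp [← pow_mul, mul_comm d 2]
  rw [show 8 = 2 * 4 from rfl]
  simp only [hexpand, irreducible_expand_iff hmonic hm, hquadratic, not_and_or, not_forall, not_not,
    exists_prop]

end

/-- Schinzel's reducibility criterion for `X^{2m} + bε₁X^m + cε₂` over a field of
characteristic different from 2. -/
theorem schinzel_quadratic_in_xm (K : Type*) [Field K] (hchar : ringChar K ≠ 2)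
    (b c m : ℕ) (hb : 0 < b) (hc : 0 < c) (hm : 1 ≤ m)
    (ε₁ ε₂ : ℤ) (hε₁ : ε₁ = 1 ∨ ε₁ = -1) (hε₂ : ε₂ = 1 ∨ ε₂ = -1) :
    ¬ Irreducible ((X : Polynomial K) ^ (2 * m) +
        C ((b : K) * (ε₁ : K)) * X ^ m + C ((c : K) * (ε₂ : K))) ↔
      ((∃ x : K, (b : K) ^ 2 - 4 * (c : K) * (ε₂ : K) = x ^ 2) ∨
       (∃ p : ℕ, p.Prime ∧ p ∣ m ∧
         ¬ Irreducible ((X : Polynomial K) ^ (2 * p) +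
            C ((b : K) * (ε₁ : K)) * X ^ p + C ((c : K) * (ε₂ : K)))) ∨
       (4 ∣ m ∧
         ¬ Irreducible ((X : Polynomial K) ^ 8 +
            C ((b : K) * (ε₁ : K)) * X ^ 4 + C ((c : K) * (ε₂ : K))))) := by
  have hsq : ((b : K) * ε₁) ^ 2 = (b : K) ^ 2 := by rcases hε₁ with rfl | rfl <;> simp
  rw [mul_assoc, ← hsq, schinzel_quadratic_in_xm_general hchar _ _ (Nat.one_le_iff_ne_zero.mp hm)]
end

section
/- Let p be an odd prime, let u ≥ 2 be an integer, and let ε₁ ∈ {−1, +1}. Then the polynomial X^{2p} + ε₁·X^p + u^p is irreducible over ℚ. -/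
open Polynomial

open IntermediateField NumberField

/-!
Let `x` be a root of `X² + εX + m` with `ε = ±1`, generating a quadratic field with nontrivial
automorphism `σ`. By Kummer theory `X²ⁿ + εXⁿ + m` is irreducible as soon as `x = bᵖ` is
impossible for the primes `p ∣ n`. If `x = bᵖ`, put `c = σ b`. The rational integer `t = b + c`
divides `bᵖ + cᵖ = -ε`, so `t = ±1`. As `tᵖ` is congruent to `bᵖ + cᵖ` modulo the odd prime `p`
and both are `±1`, even `(b + c)ᵖ = bᵖ + cᵖ`. Since `(b + c)ᵖ - bᵖ - cᵖ = p b c (cᵖ⁻² + b r)` with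
`r` integral, `b` divides `cᵖ⁻²`; being coprime to `c`, it is a unit, and so is `m = (b c)ᵖ`.
-/

section AddPowPrime

variable {R : Type*} {p : ℕ}

lemma exists_add_pow_prime_eq_mul_pow_add [CommSemiring R] (hp : p.Prime) (x y : R) :
    ∃ r, (x + y) ^ p = x ^ p + y ^ p + p * x * y * (x ^ (p - 2) + y * r) := by
  have htop : p - 1 ∈ Finset.Ioo 0 p := by
    have := hp.two_le
    simp only [Finset.mem_Ioo]
    omega
  have hdvd : y ∣ ∑ k ∈ (Finset.Ioo 0 p).erase (p - 1),
      x ^ (k - 1) * y ^ (p - k - 1) * ↑(p.choose k / p) := by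
    refine Finset.dvd_sum fun k hk ↦ ?_
    have hexp : p - k - 1 ≠ 0 := by
      simp only [Finset.mem_erase, Finset.mem_Ioo] at hk
      omega
    exact ((dvd_pow_self y hexp).mul_left _).mul_right _
  obtain ⟨r, hr⟩ := hdvd
  have hlast : x ^ (p - 1 - 1) * y ^ (p - (p - 1) - 1) * ↑(p.choose (p - 1) / p) =
      x ^ (p - 2) := by
    have hchoose : p.choose (p - 1) = p := by
      rw [Nat.choose_symm (Nat.one_le_iff_ne_zero.2 hp.ne_zero), Nat.choose_one_right]
    rw [hchoose, Nat.div_self hp.pos, Nat.sub_sub_self hp.one_le, Nat.sub_sub]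
    simp
  exact ⟨r, by rw [add_pow_prime_eq hp, ← Finset.add_sum_erase _ _ htop, hlast, hr]⟩

lemma isUnit_of_add_pow_prime_eq [CommRing R] [NoZeroDivisors R] (hp : p.Prime)
    (hpR : (p : R) ≠ 0) {x y : R} (hx : x ≠ 0) (hy : y ≠ 0) (hxy : IsCoprime x y)
    (h : (x + y) ^ p = x ^ p + y ^ p) : IsUnit y := by
  obtain ⟨r, hr⟩ := exists_add_pow_prime_eq_mul_pow_add hp x y
  have hfactor : x ^ (p - 2) + y * r = 0 := by
    refine (mul_eq_zero.1 ?_).resolve_left (mul_ne_zero (mul_ne_zero hpR hx) hy)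
    rw [← add_eq_left, ← hr, h]
  have hdvd : y ∣ x ^ (p - 2) := ⟨-r, by linear_combination hfactor⟩
  exact (hxy.symm.pow_right).isUnit_of_dvd' dvd_rfl hdvd

end AddPowPrime

lemma eq_of_isUnit_of_dvd_sub {a b n : ℤ} (ha : IsUnit a) (hb : IsUnit b) (hn : Odd n)
    (hn' : ¬IsUnit n) (h : n ∣ a - b) : a = b := by
  by_contra hab
  have htwo : n ∣ 2 := by
    rcases Int.isUnit_iff.1 ha with rfl | rfl <;> rcases Int.isUnit_iff.1 hb with rfl | rfl
    · exact absurd rfl hab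
    · exact h
    · exact (dvd_neg (b := (2 : ℤ))).1 h
    · exact absurd rfl hab
  exact hn' ((Int.isCoprime_two_right.2 hn).isUnit_of_dvd' dvd_rfl htwo)

lemma algebraMap_int_dvd_algebraMap_int_iff (R : Type*) [CommRing R] [Nontrivial R]
    [Module.Free ℤ R] [Module.Finite ℤ R] {a b : ℤ} :
    algebraMap ℤ R a ∣ algebraMap ℤ R b ↔ a ∣ b := by
  refine ⟨fun h ↦ ?_, map_dvd _⟩
  have hnorm := map_dvd (Algebra.norm ℤ) h
  simp only [Algebra.norm_algebraMap] at hnorm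
  exact (Int.pow_dvd_pow_iff Module.finrank_pos.ne').1 hnorm

section QuadraticField

lemma exists_gal_trace_eq_add (F K : Type*) [Field F] [Field K] [Algebra F K]
    [Algebra.IsQuadraticExtension F K] [Algebra.IsSeparable F K] :
    ∃ σ : Gal(K/F), ∀ b : K, algebraMap F K (Algebra.trace F K b) = b + σ b := by
  classical
  have hcard : Nat.card Gal(K/F) = 2 := by
    rw [IsGalois.card_aut_eq_finrank, Algebra.IsQuadraticExtension.finrank_eq_two]
  obtain ⟨σ, hσ, hunique⟩ := (Nat.card_eq_two_iff' (1 : Gal(K/F))).1 hcard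
  have huniv : (Finset.univ : Finset Gal(K/F)) = {1, σ} := by
    ext τ
    simpa [or_iff_not_imp_left] using hunique τ
  refine ⟨σ, fun b ↦ ?_⟩
  rw [trace_eq_sum_automorphisms, huniv, Finset.sum_pair hσ.symm, AlgEquiv.one_apply]

variable {K : Type*} [Field K] [NumberField K] [Algebra.IsQuadraticExtension ℚ K]

variable (K) in
lemma exists_ringEquiv_ringOfIntegers_trace_eq_add :
    ∃ σ : 𝓞 K ≃+* 𝓞 K, ∀ b, algebraMap ℤ (𝓞 K) (Algebra.trace ℤ (𝓞 K) b) = b + σ b := by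
  obtain ⟨σ, hσ⟩ := exists_gal_trace_eq_add ℚ K
  refine ⟨RingOfIntegers.mapRingEquiv σ, fun b ↦ RingOfIntegers.ext ?_⟩
  simpa [← Algebra.coe_trace_int] using hσ b

lemma trace_dvd_trace_pow {n : ℕ} (hn : Odd n) (b : 𝓞 K) :
    Algebra.trace ℤ (𝓞 K) b ∣ Algebra.trace ℤ (𝓞 K) (b ^ n) := by
  obtain ⟨σ, hσ⟩ := exists_ringEquiv_ringOfIntegers_trace_eq_add K
  rw [← algebraMap_int_dvd_algebraMap_int_iff (𝓞 K), hσ, hσ, map_pow]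
  exact hn.add_dvd_pow_add_pow b (σ b)

lemma prime_dvd_trace_pow_sub_trace_pow {p : ℕ} (hp : p.Prime) (b : 𝓞 K) :
    (p : ℤ) ∣ Algebra.trace ℤ (𝓞 K) b ^ p - Algebra.trace ℤ (𝓞 K) (b ^ p) := by
  obtain ⟨σ, hσ⟩ := exists_ringEquiv_ringOfIntegers_trace_eq_add K
  obtain ⟨r, hr⟩ := exists_add_pow_prime_eq hp b (σ b)
  rw [← algebraMap_int_dvd_algebraMap_int_iff (𝓞 K), map_sub, map_pow, hσ, hσ, map_pow, hr,
    map_natCast]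
  exact ⟨b * σ b * r, by ring⟩

theorem isUnit_of_isUnit_trace_pow {p : ℕ} (hp : p.Prime) (hodd : Odd p) {b : 𝓞 K}
    (h : IsUnit (Algebra.trace ℤ (𝓞 K) (b ^ p))) : IsUnit b := by
  have ht_unit : IsUnit (Algebra.trace ℤ (𝓞 K) b) :=
    isUnit_of_dvd_unit (trace_dvd_trace_pow hodd b) h
  have ht_pow : Algebra.trace ℤ (𝓞 K) b ^ p = Algebra.trace ℤ (𝓞 K) (b ^ p) :=
    eq_of_isUnit_of_dvd_sub (ht_unit.pow p) h hodd.natCast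
      (Nat.prime_iff_prime_int.1 hp).not_isUnit (prime_dvd_trace_pow_sub_trace_pow hp b)
  obtain ⟨σ, hσ⟩ := exists_ringEquiv_ringOfIntegers_trace_eq_add K
  have hb : b ≠ 0 := by
    rintro rfl
    simp [hp.ne_zero] at h
  have hcoprime : IsCoprime (σ b) b := by
    obtain ⟨c, hc⟩ := (ht_unit.map (algebraMap ℤ (𝓞 K))).exists_left_inv
    exact ⟨c, c, by rw [← mul_add, add_comm, ← hσ, hc]⟩
  have hpow : (σ b + b) ^ p = σ b ^ p + b ^ p := by
    rw [add_comm, ← hσ, ← map_pow, ht_pow, hσ, map_pow, add_comm]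
  exact isUnit_of_add_pow_prime_eq hp (mod_cast hp.ne_zero) (by simpa using hb) hb hcoprime hpow

lemma pow_ne_of_isUnit_trace {p : ℕ} (hp : p.Prime) (hodd : Odd p) {x : 𝓞 K}
    (htrace : IsUnit (Algebra.trace ℤ (𝓞 K) x)) (hx : ¬IsUnit x) (b : K) : b ^ p ≠ x := by
  intro hb
  let β : 𝓞 K := ⟨b, IsIntegral.of_pow hp.pos (hb ▸ x.isIntegral_coe)⟩
  have hβ : β ^ p = x := RingOfIntegers.ext hb
  rw [← hβ] at htrace hx
  exact hx ((isUnit_of_isUnit_trace_pow hp hodd htrace).pow p)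

end QuadraticField

lemma monic_quadratic {R : Type*} [CommRing R] (b c : R) :
    (X ^ 2 + C b * X + C c).Monic := by
  monicity!

lemma irreducible_quadratic_of_not_isSquare_discrim {F : Type*} [Field F] {b c : F}
    (h : ¬IsSquare (discrim 1 b c)) : Irreducible (X ^ 2 + C b * X + C c) := by
  have hdeg : (X ^ 2 + C b * X + C c).natDegree = 2 := by compute_degree!
  rw [(monic_quadratic b c).irreducible_iff_roots_eq_zero_of_degree_le_three
    hdeg.ge (by lia), Multiset.eq_zero_iff_forall_notMem]
  intro x hx
  have hroot : 1 * (x * x) + b * x + c = 0 := by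
    simpa [sq] using (mem_roots'.1 hx).2
  exact h ⟨_, (discrim_eq_sq_of_quadratic_eq_zero hroot).trans (sq _)⟩

-- `A` is not an instance argument because the `ℚ`-algebra structure carried by
-- `adjoin.powerBasis` on `ℚ⟮x⟯` is not the one that instance search finds.
lemma pow_ne_powerBasis_gen {K : Type*} [Field K] {A : Algebra ℚ K} (pb : PowerBasis ℚ K)
    {ε m : ℤ} (hε : IsUnit ε) (hm : ¬IsUnit m)
    (hmin : minpoly ℚ pb.gen = X ^ 2 + C (ε : ℚ) * X + C (m : ℚ)) {p : ℕ} (hp : p.Prime)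
    (hodd : Odd p) (b : K) : b ^ p ≠ pb.gen := by
  have : CharZero K := algebraRat.charZero K
  obtain rfl : A = DivisionRing.toRatAlgebra := Subsingleton.elim _ _
  have : NumberField K := { to_finiteDimensional := pb.finite }
  have hdeg : (minpoly ℚ pb.gen).natDegree = 2 := by
    rw [hmin]
    compute_degree!
  have : Algebra.IsQuadraticExtension ℚ K :=
    { finrank_eq_two' := by rw [pb.finrank, ← pb.natDegree_minpoly, hdeg] }
  have hgen : IsIntegral ℤ pb.gen := by
    refine ⟨X ^ 2 + C ε * X + C m, monic_quadratic ε m, ?_⟩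
    have h := minpoly.aeval ℚ pb.gen
    rw [hmin] at h
    simpa [-eq_intCast, -map_intCast, eval₂_C] using h
  let x : 𝓞 K := ⟨pb.gen, hgen⟩
  have hx_coe : (x : K) = pb.gen := rfl
  have htrace : Algebra.trace ℤ (𝓞 K) x = -ε := by
    rw [← Int.cast_inj (α := ℚ), Algebra.coe_trace_int, hx_coe,
      pb.trace_gen_eq_nextCoeff_minpoly, nextCoeff_of_natDegree_pos (by lia), hdeg, hmin]
    simp [-map_intCast, coeff_C]
  have hnorm : Algebra.norm ℤ x = m := by
    rw [← Int.cast_inj (α := ℚ), Algebra.coe_norm_int, hx_coe,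
      Algebra.PowerBasis.norm_gen_eq_coeff_zero_minpoly, ← pb.natDegree_minpoly, hdeg, hmin]
    simp [-map_intCast]
  have hx : ¬IsUnit x := fun h ↦ hm (hnorm ▸ h.map (Algebra.norm ℤ))
  exact pow_ne_of_isUnit_trace hp hodd (htrace ▸ hε.neg) hx b

theorem filaseta_x2p_general {n : ℕ} (hn : Odd n) {ε m : ℤ} (hε : IsUnit ε)
    (hm : ¬IsUnit m) (hdisc : ¬IsSquare (1 - 4 * m)) :
    Irreducible ((X : ℚ[X]) ^ (2 * n) + C (ε : ℚ) * X ^ n + C (m : ℚ)) := by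
  have hirr : Irreducible (X ^ 2 + C (ε : ℚ) * X + C (m : ℚ)) := by
    refine irreducible_quadratic_of_not_isSquare_discrim fun h ↦
      hdisc (Rat.isSquare_intCast_iff.1 ?_)
    have hε_sq : (ε : ℚ) ^ 2 = 1 := mod_cast Int.isUnit_sq hε
    simpa [discrim, hε_sq] using h
  have hcomp := irreducible_comp (monic_quadratic _ _) (monic_X_pow n) hirr
    fun E _ _ x hx ↦ by
      have hx_int : IsIntegral ℚ x := minpoly.ne_zero_iff.1 (hx ▸ hirr.ne_zero)
      rw [Polynomial.map_pow, map_X]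
      refine X_pow_sub_C_irreducible_of_odd hn fun p hp hpn b ↦ ?_
      simpa using pow_ne_powerBasis_gen (adjoin.powerBasis hx_int) hε hm
        (by simpa [minpoly_gen] using hx) hp (hn.of_dvd_nat hpn) b
  simpa [← pow_mul, mul_comm n] using hcomp

/-- Filaseta et al.: `X^{2p} + ε₁X^p + u^p` is irreducible over `ℚ`. -/
theorem filaseta_x2p (p : ℕ) (hp : p.Prime) (hodd : Odd p) (u : ℕ) (hu : 2 ≤ u)
    (ε₁ : ℤ) (hε₁ : ε₁ = 1 ∨ ε₁ = -1) :
    Irreducible ((X : Polynomial ℚ) ^ (2 * p) + C (ε₁ : ℚ) * X ^ p + C ((u : ℚ) ^ p)) := by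
  have hpow : (1 : ℤ) < (u : ℤ) ^ p := one_lt_pow₀ (by lia) hp.ne_zero
  simpa using filaseta_x2p_general hodd (Int.isUnit_iff.2 hε₁) (m := (u : ℤ) ^ p)
    (by rw [Int.isUnit_iff]; lia) (fun h ↦ by linarith [h.nonneg])
end

section
/- Let p be a prime, let c be a positive integer with p ∤ c, and let ε₂ ∈ {−1, +1}. Then the polynomial X^p − X + c·ε₂ is irreducible in ℤ[X]. -/
open Polynomial

/-!
Let `K` be a field of characteristic `p`. Two roots of `X ^ p - X + a` in an extension of `K` differ
by a fixed point of Frobenius, that is, by an element of the prime field. So if `α` is a root of a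
factor of degree `d`, then the sum of the roots of this factor is `d * α` up to an element of the
prime field; but that sum lies in `K`, since it is read off the coefficients. If `p ∤ d`, this
forces `α ∈ K`. Hence, if `X ^ p - X + a` has no root in `K`, it has no factor of degree strictly
between `0` and `p`. Over `ℤ` one reduces modulo `p`, where `x ^ p - x + a = a` by Fermat's little
theorem.
-/

section SumOfRoots

variable {K L : Type*} [Field K] [Field L] [Algebra K L] {g : K[X]}

theorem sum_aroots_mem_fieldRange (hg : (g.map (algebraMap K L)).Splits) :
    (g.aroots L).sum ∈ (algebraMap K L).fieldRange := by
  rcases eq_or_ne g 0 with rfl | hg0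
  · simp
  have hlead : algebraMap K L g.leadingCoeff ≠ 0 := by simpa using hg0
  have hnext : algebraMap K L g.nextCoeff = -algebraMap K L g.leadingCoeff * (g.aroots L).sum := by
    rw [← nextCoeff_map (algebraMap K L).injective,
      hg.nextCoeff_eq_neg_sum_roots_mul_leadingCoeff, leadingCoeff_map, aroots_def]
  refine ⟨-g.nextCoeff / g.leadingCoeff, ?_⟩
  rw [map_div₀, map_neg, hnext]
  field_simp

theorem natDegree_mul_mem_fieldRange (hg : (g.map (algebraMap K L)).Splits) {α : L}
    (hα : ∀ β ∈ g.aroots L, α - β ∈ (algebraMap K L).fieldRange) :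
    (g.natDegree : L) * α ∈ (algebraMap K L).fieldRange := by
  have hcard : (g.aroots L).card = g.natDegree := by
    rw [aroots_def, ← hg.natDegree_eq_card_roots, natDegree_map]
  have hsum : ((g.aroots L).map fun β ↦ α - β).sum = g.natDegree * α - (g.aroots L).sum := by
    rw [Multiset.sum_map_sub, Multiset.map_const', Multiset.sum_replicate, hcard, nsmul_eq_mul,
      Multiset.map_id']
  have hdiff : ((g.aroots L).map fun β ↦ α - β).sum ∈ (algebraMap K L).fieldRange :=
    multiset_sum_mem _ (by simpa only [Multiset.forall_mem_map_iff] using hα)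
  rw [← sub_add_cancel ((g.natDegree : L) * α) (g.aroots L).sum, ← hsum]
  exact add_mem hdiff (sum_aroots_mem_fieldRange hg)

end SumOfRoots

theorem sub_mem_bot_of_pow_sub_self_eq {L : Type*} [Field L] {p : ℕ} [Fact p.Prime] [CharP L p]
    {x y : L} (h : x ^ p - x = y ^ p - y) : x - y ∈ (⊥ : Subfield L) := by
  rw [Subfield.mem_bot_iff_pow_eq_self L p, sub_pow_char]
  linear_combination h

section TrinomialDegree

variable {R : Type*} [CommRing R] {n : ℕ}

theorem monic_X_pow_sub_X_add_C (hn : 1 < n) (a : R) : (X ^ n - X + C a).Monic := by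
  rw [sub_add]
  exact monic_X_pow_sub ((degree_X_sub_C_le a).trans_lt (by exact_mod_cast hn))

theorem natDegree_X_pow_sub_X_add_C [Nontrivial R] (hn : 1 < n) (a : R) :
    (X ^ n - X + C a).natDegree = n := by
  compute_degree!
  · simp [hn.ne, Nat.ne_zero_of_lt hn]
  · exact hn.le

end TrinomialDegree

section ArtinSchreier

variable {K : Type*} [Field K] {p : ℕ} [Fact p.Prime] [CharP K p] {a : K}

theorem dvd_natDegree_of_dvd_X_pow_sub_X_add_C (ha : ∀ x : K, x ^ p - x + a ≠ 0) {g : K[X]}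
    (hg : g ∣ X ^ p - X + C a) : p ∣ g.natDegree := by
  by_contra hpg
  let L := AlgebraicClosure K
  have : CharP L p := charP_of_injective_algebraMap (algebraMap K L).injective p
  have hroot {β : L} (hβ : aeval β g = 0) : β ^ p - β = -algebraMap K L a := by
    have hβ' := aeval_eq_zero_of_dvd_aeval_eq_zero hg hβ
    simp only [map_add, map_sub, map_pow, aeval_X, aeval_C] at hβ'
    linear_combination hβ'
  obtain ⟨α, hα⟩ : ∃ α : L, aeval α g = 0 :=
    IsAlgClosed.exists_aeval_eq_zero _ g fun hdeg ↦
      hpg (natDegree_eq_zero_iff_degree_le_zero.mpr hdeg.le ▸ dvd_zero p)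
  have hdiff (β : L) (hβ : β ∈ g.aroots L) : α - β ∈ (algebraMap K L).fieldRange :=
    have hprime : α - β ∈ (⊥ : Subfield L) :=
      sub_mem_bot_of_pow_sub_self_eq (p := p) ((hroot hα).trans (hroot (mem_aroots.mp hβ).2).symm)
    (bot_le : ⊥ ≤ (algebraMap K L).fieldRange) hprime
  obtain ⟨y, hy⟩ := natDegree_mul_mem_fieldRange (IsAlgClosed.splits _) hdiff
  have hd : (g.natDegree : L) ≠ 0 := by rwa [Ne, CharP.cast_eq_zero_iff L p]
  have hαK : algebraMap K L (y / g.natDegree) = α := by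
    rw [map_div₀, map_natCast, hy, mul_div_cancel_left₀ _ hd]
  refine ha (y / g.natDegree) ((algebraMap K L).injective ?_)
  rw [map_add, map_sub, map_pow, hαK, hroot hα, neg_add_cancel, map_zero]

theorem irreducible_X_pow_sub_X_add_C (ha : ∀ x : K, x ^ p - x + a ≠ 0) :
    Irreducible (X ^ p - X + C a) := by
  have hp : 1 < p := (Fact.out : p.Prime).one_lt
  have hmonic := monic_X_pow_sub_X_add_C hp a
  have hdeg := natDegree_X_pow_sub_X_add_C hp a
  have hne : X ^ p - X + C a ≠ 1 := ne_of_apply_ne natDegree (by rw [hdeg, natDegree_one]; omega)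
  rw [hmonic.irreducible_iff_lt_natDegree_lt hne]
  intro g _ hg hdvd
  rw [hdeg, Finset.mem_Ioc] at hg
  have := Nat.le_of_dvd hg.1 (dvd_natDegree_of_dvd_X_pow_sub_X_add_C ha hdvd)
  omega

end ArtinSchreier

theorem serret_ore_general {R K : Type*} [CommRing R] [IsDomain R] [Field K] {p : ℕ}
    [Fact p.Prime] [CharP K p] (φ : R →+* K) {a : R} (ha : ∀ x : K, x ^ p - x + φ a ≠ 0) :
    Irreducible (X ^ p - X + C a) := by
  have hmonic := monic_X_pow_sub_X_add_C (Fact.out : p.Prime).one_lt a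
  refine hmonic.irreducible_of_irreducible_map φ _ ?_
  simpa using irreducible_X_pow_sub_X_add_C ha

/-- Serret–Ore: `X^p - X + cε₂` is irreducible when `p` is a prime not dividing `c`. -/
theorem serret_ore (p : ℕ) (hp : p.Prime) (c : ℕ) (hc : 0 < c) (hpc : ¬ p ∣ c)
    (ε₂ : ℤ) (hε₂ : ε₂ = 1 ∨ ε₂ = -1) :
    Irreducible ((X : Polynomial ℤ) ^ p - X + C ((c : ℤ) * ε₂)) := by
  have : Fact p.Prime := ⟨hp⟩
  refine serret_ore_general (Int.castRingHom (ZMod p)) fun x ↦ ?_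
  rcases hε₂ with rfl | rfl <;> simpa [ZMod.pow_card, ZMod.natCast_eq_zero_iff] using hpc
end

section
/- Let a, b, c be positive integers, let p be a prime with p ∤ b·c, let r ≥ 0, k ≥ 1, n ≥ 2 be integers, and let ε₁, ε₂ ∈ {−1, +1}. If p^k > b·p^{2r} + c^{n−1}·a·p^{n·r}, then the polynomial a·X^n + b·p^r·ε₁·X + p^k·c·ε₂ is irreducible over ℚ. -/
open Polynomial

/-!
Let `f = G * H` in `ℤ[X]`, where `f` has constant coefficient `p ^ k * c` and linear coefficient
`G 0 * H' 0 + G' 0 * H 0` not divisible by `p ^ (r + 1)`. Then `p ^ (r + 1)` fails to divide one of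
`G 0` and `H 0`, say `G 0`, so `G 0` divides `p ^ r * c`. If `G` were not constant, its smallest
complex root would have norm at most `|G 0| ≤ |p ^ r * c|`, as the product of the norms of all roots
is at most the positive integer `|G 0|`. But when `|f 0|` exceeds the sum of
`|aᵢ| * |p ^ r * c| ^ i` over `i ≥ 1`, where `aᵢ` are the coefficients of `f`, the constant
coefficient dominates on the disc of radius `|p ^ r * c|`, so `f` has no root there.
Gauss's lemma passes from `ℤ` to `ℚ`.
-/

lemma dvd_pow_mul_of_not_pow_succ_dvd {M : Type*} [CommMonoidWithZero M] [IsCancelMulZero M]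
    {p x c : M} {r : ℕ} (hp : Prime p) (hx : ¬ p ^ (r + 1) ∣ x) :
    ∀ k, x ∣ p ^ k * c → x ∣ p ^ r * c
  | 0, h => (pow_zero p ▸ h).trans (mul_dvd_mul_right (one_dvd _) c)
  | k + 1, ⟨y, hy⟩ => by
    by_cases hpy : p ∣ y
    · obtain ⟨z, rfl⟩ := hpy
      have hxz : p ^ k * c = x * z := mul_left_cancel₀ hp.ne_zero <| by
        rw [← mul_assoc, ← pow_succ', hy, mul_left_comm]
      exact dvd_pow_mul_of_not_pow_succ_dvd hp hx k ⟨z, hxz⟩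
    · have hpx : p ^ (k + 1) ∣ x :=
        hp.pow_dvd_of_dvd_mul_right _ hpy (hy ▸ dvd_mul_right _ _)
      have hkr : k + 1 ≤ r := by
        by_contra! hrk
        exact hx ((pow_dvd_pow p hrk).trans hpx)
      exact (Dvd.intro y hy.symm).trans (mul_dvd_mul_right (pow_dvd_pow p hkr) c)

lemma exists_mem_roots_norm_le_max_one_norm_coeff_zero {K : Type*} [NormedField K] {f : K[X]}
    (hf : f.Splits) (hdeg : f.natDegree ≠ 0) (hlead : 1 ≤ ‖f.leadingCoeff‖) :
    ∃ z ∈ f.roots, ‖z‖ ≤ max 1 ‖f.coeff 0‖ := by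
  by_cases hsmall : ∃ z ∈ f.roots, ‖z‖ ≤ 1
  · obtain ⟨z, hz, hz1⟩ := hsmall
    exact ⟨z, hz, hz1.trans (le_max_left _ _)⟩
  push Not at hsmall
  obtain ⟨z, hz⟩ : ∃ z, z ∈ f.roots := Multiset.card_pos_iff_exists_mem.1 <| by
    rw [← hf.natDegree_eq_card_roots]
    exact Nat.pos_of_ne_zero hdeg
  have hprod : ‖z‖₊ ≤ (f.roots.map nnnormHom).prod := by
    refine Multiset.single_le_prod (fun x hx => ?_) _ (Multiset.mem_map_of_mem nnnormHom hz)
    obtain ⟨w, hw, rfl⟩ := Multiset.mem_map.1 hx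
    exact (hsmall w hw).le
  rw [← map_multiset_prod] at hprod
  refine ⟨z, hz, le_max_of_le_right ?_⟩
  calc ‖z‖ ≤ ‖f.roots.prod‖ := hprod
    _ ≤ ‖f.leadingCoeff‖ * ‖f.roots.prod‖ := le_mul_of_one_le_left (norm_nonneg _) hlead
    _ = ‖f.coeff 0‖ := by simp [hf.coeff_zero_eq_leadingCoeff_mul_prod_roots]

lemma exists_aeval_eq_zero_norm_le_abs_coeff_zero {g : ℤ[X]} (hdeg : g.natDegree ≠ 0)
    (h0 : g.coeff 0 ≠ 0) : ∃ z : ℂ, aeval z g = 0 ∧ ‖z‖ ≤ |g.coeff 0| := by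
  have hinj : Function.Injective (algebraMap ℤ ℂ) := RingHom.injective_int _
  have hlead : 1 ≤ ‖(g.map (algebraMap ℤ ℂ)).leadingCoeff‖ := by
    have hg : g.leadingCoeff ≠ 0 := leadingCoeff_ne_zero.2 fun h => hdeg (by simp [h])
    rw [leadingCoeff_map_of_injective hinj, eq_intCast, Complex.norm_intCast]
    exact_mod_cast Int.one_le_abs hg
  obtain ⟨z, hz, hle⟩ := exists_mem_roots_norm_le_max_one_norm_coeff_zero
    (IsAlgClosed.splits (g.map (algebraMap ℤ ℂ)))
    (by rwa [natDegree_map_eq_of_injective hinj]) hlead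
  refine ⟨z, by rw [aeval_def, ← eval_map]; exact isRoot_of_mem_roots hz, ?_⟩
  have h1 : (1 : ℝ) ≤ |g.coeff 0| := by exact_mod_cast Int.one_le_abs h0
  rwa [coeff_map, eq_intCast, Complex.norm_intCast, ← Int.cast_abs, max_eq_right h1] at hle

lemma eval_ne_zero_of_sum_norm_coeff_lt {A : Type*} [SeminormedRing A] {f : A[X]} {z : A} {R : ℝ}
    (hz : ‖z‖ ≤ R) (hf : ∑ i ∈ f.support.erase 0, ‖f.coeff i‖ * R ^ i < ‖f.coeff 0‖) :
    f.eval z ≠ 0 := by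
  intro hroot
  have htail : f.coeff 0 = -∑ i ∈ f.support.erase 0, f.coeff i * z ^ i := by
    rw [← monomial_add_erase f 0, eval_add, eval_monomial, pow_zero, mul_one,
      eval_eq_sum (p := f.erase 0), sum_def, support_erase] at hroot
    rw [eq_neg_of_add_eq_zero_left hroot]
    exact congrArg _ <| Finset.sum_congr rfl fun i hi => by
      rw [erase_ne f (Finset.ne_of_mem_erase hi)]
  refine hf.not_ge ?_
  calc ‖f.coeff 0‖ ≤ ∑ i ∈ f.support.erase 0, ‖f.coeff i * z ^ i‖ := by
        rw [htail, norm_neg]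
        exact norm_sum_le _ _
    _ ≤ ∑ i ∈ f.support.erase 0, ‖f.coeff i‖ * R ^ i := by
        refine Finset.sum_le_sum fun i hi => (norm_mul_le _ _).trans ?_
        gcongr
        exact (norm_pow_le' z (Nat.pos_of_ne_zero (Finset.ne_of_mem_erase hi))).trans (by gcongr)

lemma natDegree_eq_zero_of_dvd_of_sum_abs_coeff_lt {f g : ℤ[X]} {R : ℤ} (hgf : g ∣ f)
    (hg : |g.coeff 0| ≤ R)
    (hf : ∑ i ∈ f.support.erase 0, |f.coeff i| * R ^ i < |f.coeff 0|) :
    g.natDegree = 0 := by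
  by_contra hdeg
  have hR : 0 ≤ R := (abs_nonneg _).trans hg
  have hf0 : f.coeff 0 ≠ 0 :=
    abs_pos.1 ((Finset.sum_nonneg fun i _ => by positivity).trans_lt hf)
  obtain ⟨q, rfl⟩ := hgf
  have hg0 : g.coeff 0 ≠ 0 := fun h => hf0 (by rw [mul_coeff_zero, h, zero_mul])
  obtain ⟨z, hz, hle⟩ := exists_aeval_eq_zero_norm_le_abs_coeff_zero hdeg hg0
  have hzR : ‖z‖ ≤ R := hle.trans (by exact_mod_cast hg)
  refine eval_ne_zero_of_sum_norm_coeff_lt (f := (g * q).map (algebraMap ℤ ℂ)) hzR ?_ ?_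
  · rw [support_map_of_injective _ (RingHom.injective_int _)]
    simp only [coeff_map, eq_intCast, Complex.norm_intCast]
    exact_mod_cast hf
  · rw [eval_map, ← aeval_def, map_mul, hz, zero_mul]

lemma irreducible_map_of_forall_mul_natDegree_eq_zero {R : Type*} (K : Type*) [CommRing R]
    [IsDomain R] [NormalizedGCDMonoid R] [Field K] [Algebra R K] [IsFractionRing R K] {f : R[X]}
    (hdeg : f.natDegree ≠ 0)
    (hf : ∀ g h : R[X], f = g * h → g.natDegree = 0 ∨ h.natDegree = 0) :
    Irreducible (f.map (algebraMap R K)) := by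
  have hcont : f.content ≠ 0 := fun h => hdeg (by simp [content_eq_zero_iff.1 h])
  have hprim := f.isPrimitive_primPart
  have isUnit_of_dvd {q : R[X]} (hq : q ∣ f.primPart) (hq0 : q.natDegree = 0) : IsUnit q := by
    rw [eq_C_of_natDegree_eq_zero hq0] at hq ⊢
    exact (hprim _ hq).map C
  have hirr : Irreducible f.primPart := by
    refine ⟨fun hu => hdeg (f.natDegree_primPart ▸ natDegree_eq_zero_of_isUnit hu), ?_⟩
    intro g h hgh
    have hfact : f = C f.content * g * h := by
      rw [mul_assoc, ← hgh, ← f.eq_C_content_mul_primPart]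
    refine (hf _ _ hfact).imp (fun hg => ?_) (isUnit_of_dvd (Dvd.intro_left g hgh.symm))
    exact isUnit_of_dvd (Dvd.intro h hgh.symm) (by rwa [natDegree_C_mul hcont] at hg)
  have hunit : IsUnit (C (algebraMap R K f.content)) := isUnit_C.2 <| isUnit_iff_ne_zero.2 <| by
    simpa using hcont
  rw [f.eq_C_content_mul_primPart, Polynomial.map_mul, map_C, irreducible_isUnit_mul hunit]
  exact hprim.irreducible_iff_irreducible_map_fraction_map.1 hirr

theorem irreducible_map_rat_of_sum_abs_coeff_lt {f : ℤ[X]} {p c : ℤ} {k r : ℕ} (hp : Prime p)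
    (h0 : f.coeff 0 = p ^ k * c) (h1 : ¬ p ^ (r + 1) ∣ f.coeff 1)
    (hf : ∑ i ∈ f.support.erase 0, |f.coeff i| * |p ^ r * c| ^ i < |f.coeff 0|) :
    Irreducible (f.map (algebraMap ℤ ℚ)) := by
  have hpc : p ^ r * c ≠ 0 := by
    refine mul_ne_zero (pow_ne_zero r hp.ne_zero) fun hc => hf.not_ge ?_
    rw [h0, hc, mul_zero, abs_zero]
    exact Finset.sum_nonneg fun i _ => by positivity
  have constant_of_dvd {g : ℤ[X]} (hgf : g ∣ f) (hg : ¬ p ^ (r + 1) ∣ g.coeff 0) :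
      g.natDegree = 0 := by
    have hdvd : g.coeff 0 ∣ p ^ r * c :=
      dvd_pow_mul_of_not_pow_succ_dvd hp hg k (h0 ▸ map_dvd constantCoeff hgf)
    exact natDegree_eq_zero_of_dvd_of_sum_abs_coeff_lt hgf (Int.le_of_dvd (abs_pos.2 hpc)
      ((abs_dvd_abs _ _).2 hdvd)) hf
  have hdeg : f.natDegree ≠ 0 := fun h => h1 <| by
    rw [coeff_eq_zero_of_natDegree_lt (h ▸ one_pos)]
    exact dvd_zero _
  refine irreducible_map_of_forall_mul_natDegree_eq_zero ℚ hdeg fun g h hgh => ?_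
  by_cases hg : p ^ (r + 1) ∣ g.coeff 0
  · refine .inr (constant_of_dvd (Dvd.intro_left g hgh.symm) fun hh => h1 ?_)
    rw [hgh, mul_coeff_one]
    exact dvd_add (hg.mul_right _) (hh.mul_left _)
  · exact .inl (constant_of_dvd (Dvd.intro h hgh.symm) hg)

lemma sum_support_erase_zero_trinomial_le {a b c R : ℤ} {n : ℕ} (hn : 2 ≤ n) (hR : 0 ≤ R) :
    ∑ i ∈ (trinomial 0 1 n c b a).support.erase 0, |(trinomial 0 1 n c b a).coeff i| * R ^ i ≤
      |b| * R + |a| * R ^ n := by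
  calc _ ≤ ∑ i ∈ {1, n}, |(trinomial 0 1 n c b a).coeff i| * R ^ i := by
        refine Finset.sum_le_sum_of_subset_of_nonneg ?_ fun i _ _ => by positivity
        exact Finset.subset_insert_iff.1 (support_trinomial_subset 0 1 n c b a)
    _ = |b| * R + |a| * R ^ n := by
        rw [Finset.sum_pair (by lia), trinomial_middle_coeff one_pos hn,
          trinomial_leading_coeff' one_pos hn, pow_one]

theorem bonciocat_criterion_general {a b c : ℤ} {p r k n : ℕ} (hp : p.Prime) (hb : ¬ (p : ℤ) ∣ b)
    (hc : c ≠ 0) (hn : 2 ≤ n)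
    (hbig : |b| * (p : ℤ) ^ (2 * r) + |c| ^ (n - 1) * |a| * (p : ℤ) ^ (n * r) < (p : ℤ) ^ k) :
    Irreducible (C (a : ℚ) * X ^ n + C ((b : ℚ) * (p : ℚ) ^ r) * X +
      C ((p : ℚ) ^ k * (c : ℚ))) := by
  set f : ℤ[X] := trinomial 0 1 n ((p : ℤ) ^ k * c) (b * (p : ℤ) ^ r) a with hf
  have hp0 : (p : ℤ) ^ r ≠ 0 := pow_ne_zero r (Int.natCast_ne_zero.2 hp.ne_zero)
  have h0 : f.coeff 0 = (p : ℤ) ^ k * c := trinomial_trailing_coeff' one_pos hn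
  have h1 : ¬ (p : ℤ) ^ (r + 1) ∣ f.coeff 1 := by
    rwa [hf, trinomial_middle_coeff one_pos hn, pow_succ', mul_dvd_mul_iff_right hp0]
  have hsum : ∑ i ∈ f.support.erase 0, |f.coeff i| * |(p : ℤ) ^ r * c| ^ i < |f.coeff 0| := by
    obtain ⟨m, rfl⟩ : ∃ m, n = m + 1 := ⟨n - 1, by lia⟩
    calc _ ≤ |b * (p : ℤ) ^ r| * |(p : ℤ) ^ r * c| + |a| * |(p : ℤ) ^ r * c| ^ (m + 1) :=
          sum_support_erase_zero_trinomial_le hn (abs_nonneg _)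
      _ = (|b| * (p : ℤ) ^ (2 * r) + |c| ^ m * |a| * (p : ℤ) ^ ((m + 1) * r)) * |c| := by
          simp only [abs_mul, abs_pow, Nat.abs_cast]
          ring
      _ < (p : ℤ) ^ k * |c| := mul_lt_mul_of_pos_right hbig (abs_pos.2 hc)
      _ = |f.coeff 0| := by rw [h0, abs_mul, abs_pow, Nat.abs_cast]
  convert irreducible_map_rat_of_sum_abs_coeff_lt (Nat.prime_iff_prime_int.1 hp) h0 h1 hsum using 1
  simp only [hf, trinomial_def, Polynomial.map_add, Polynomial.map_mul, Polynomial.map_pow, map_C,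
    map_X, eq_intCast (algebraMap ℤ ℚ), Int.cast_mul, Int.cast_pow, Int.cast_natCast]
  ring

/-- The Bonciocat–Bonciocat criterion: `aX^n + bp^r ε₁ X + p^k c ε₂` is irreducible
over `ℚ` when `p^k > bp^{2r} + c^{n-1}ap^{nr}`. -/
theorem bonciocat_criterion (a b c : ℕ) (ha : 0 < a) (hb : 0 < b) (hc : 0 < c)
    (p : ℕ) (hp : p.Prime) (hpbc : ¬ p ∣ b * c)
    (r k n : ℕ) (hk : 1 ≤ k) (hn : 2 ≤ n)
    (ε₁ ε₂ : ℤ) (hε₁ : ε₁ = 1 ∨ ε₁ = -1) (hε₂ : ε₂ = 1 ∨ ε₂ = -1)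
    (hbig : p ^ k > b * p ^ (2 * r) + c ^ (n - 1) * a * p ^ (n * r)) :
    Irreducible (C (a : ℚ) * X ^ n +
      C ((b : ℚ) * (p : ℚ) ^ r * (ε₁ : ℚ)) * X +
      C ((p : ℚ) ^ k * (c : ℚ) * (ε₂ : ℚ))) := by
  have hu₁ : IsUnit ε₁ := Int.isUnit_iff.2 hε₁
  have hu₂ : IsUnit ε₂ := Int.isUnit_iff.2 hε₂
  have hpb : ¬ (p : ℤ) ∣ b * ε₁ := fun h =>
    hpbc ((Int.natCast_dvd_natCast.1 (hu₁.dvd_mul_right.1 h)).mul_right c)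
  have hcε : (c : ℤ) * ε₂ ≠ 0 := mul_ne_zero (by exact_mod_cast hc.ne') hu₂.ne_zero
  have hbigε : |b * ε₁| * (p : ℤ) ^ (2 * r) + |c * ε₂| ^ (n - 1) * |(a : ℤ)| * (p : ℤ) ^ (n * r) <
      (p : ℤ) ^ k := by
    simp only [abs_mul, Int.isUnit_iff_abs_eq.1 hu₁, Int.isUnit_iff_abs_eq.1 hu₂, mul_one,
      Nat.abs_cast]
    exact_mod_cast hbig
  simpa [mul_assoc, mul_left_comm, mul_comm] using bonciocat_criterion_general hp hpb hcε hn hbigε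
end

section
/- Let f(X) = a_nX^n + ⋯ + a_1X + a_0 ∈ ℤ[X] have degree n ≥ 1 and satisfy |a_0| > |a_1| + |a_2| + ⋯ + |a_n|. If |a_0| is a prime number, or if √|a_0| − √|a_n| < 1 (square roots taken in ℝ), then f is irreducible over ℚ. -/
open Polynomial Finset

/-!
When the constant term dominates, every complex root `z` of `f` satisfies `1 < ‖z‖`. Every factor
of `f` inherits this, and since its constant term is, up to sign, its leading coefficient times the
product of its roots, a nonconstant factor over `ℤ` has its constant term larger in absolute value
than its leading coefficient. If `f = g * k` with both factors nonconstant, then both constant terms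
have absolute value at least `2`, so `|a₀|` is not prime; and the inequality
`√(a * b) + 1 ≤ √((a + 1) * (b + 1))` gives `√|aₙ| + 1 ≤ √|a₀|`. Gauss's lemma carries the absence
of such factorizations from `ℤ` to `ℚ`.
-/

section NormedRing

variable {R : Type*} [SeminormedRing R] {p : R[X]} {z : R}

theorem norm_coeff_zero_le_sum_of_isRoot (hz : p.IsRoot z) (hz_le : ‖z‖ ≤ 1) :
    ‖p.coeff 0‖ ≤ ∑ i ∈ Icc 1 p.natDegree, ‖p.coeff i‖ := by
  have hsum : p.coeff 0 = -∑ i ∈ Icc 1 p.natDegree, p.coeff i * z ^ i := by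
    rw [IsRoot.def, eval_eq_sum_range, range_eq_Ico, sum_eq_sum_Ico_succ_bot (by positivity),
      pow_zero, mul_one] at hz
    exact eq_neg_of_add_eq_zero_left hz
  rw [hsum, norm_neg]
  refine norm_sum_le_of_le _ fun i hi => ?_
  have hi_pos : 0 < i := (mem_Icc.mp hi).1
  calc ‖p.coeff i * z ^ i‖ ≤ ‖p.coeff i‖ * ‖z ^ i‖ := norm_mul_le _ _
    _ ≤ ‖p.coeff i‖ * ‖z‖ ^ i := by gcongr; exact norm_pow_le' z hi_pos
    _ ≤ ‖p.coeff i‖ := mul_le_of_le_one_right (norm_nonneg _) (pow_le_one₀ (norm_nonneg z) hz_le)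

theorem one_lt_norm_of_isRoot_of_sum_lt
    (hdom : ∑ i ∈ Icc 1 p.natDegree, ‖p.coeff i‖ < ‖p.coeff 0‖) (hz : p.IsRoot z) : 1 < ‖z‖ :=
  lt_of_not_ge fun hz_le => (norm_coeff_zero_le_sum_of_isRoot hz hz_le).not_gt hdom

end NormedRing

theorem one_lt_norm_of_aeval_eq_zero_of_sum_abs_lt {f : ℤ[X]}
    (hdom : ∑ i ∈ Icc 1 f.natDegree, |f.coeff i| < |f.coeff 0|) {z : ℂ} (hz : aeval z f = 0) :
    1 < ‖z‖ := by
  have hinj : Function.Injective (algebraMap ℤ ℂ) := Int.cast_injective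
  refine one_lt_norm_of_isRoot_of_sum_lt (p := f.map (algebraMap ℤ ℂ)) ?_
    (by rwa [IsRoot.def, eval_map_algebraMap])
  rw [natDegree_map_eq_of_injective hinj]
  simp only [coeff_map, algebraMap_int_eq, eq_intCast, Complex.norm_intCast]
  exact_mod_cast hdom

theorem norm_leadingCoeff_lt_norm_coeff_zero {K : Type*} [NormedField K] {p : K[X]}
    (hp : p.Splits) (hdeg : p.natDegree ≠ 0) (hroots : ∀ z, p.IsRoot z → 1 < ‖z‖) :
    ‖p.leadingCoeff‖ < ‖p.coeff 0‖ := by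
  have hroots_ne : p.roots ≠ 0 := by
    rwa [← Multiset.card_pos, ← hp.natDegree_eq_card_roots, Nat.pos_iff_ne_zero]
  have hprod : 1 < ‖p.roots.prod‖ :=
    Multiset.prod_induction_nonempty (fun z : K => 1 < ‖z‖)
      (fun a b ha hb => norm_mul a b ▸ one_lt_mul_of_lt_of_le ha hb.le) hroots_ne
      fun z hz => hroots z (isRoot_of_mem_roots hz)
  have hlc : 0 < ‖p.leadingCoeff‖ :=
    norm_pos_iff.mpr (leadingCoeff_ne_zero.mpr (ne_zero_of_natDegree_gt hdeg.bot_lt))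
  calc ‖p.leadingCoeff‖ < ‖p.leadingCoeff‖ * ‖p.roots.prod‖ := lt_mul_of_one_lt_right hlc hprod
    _ = ‖p.coeff 0‖ := by simp [hp.coeff_zero_eq_leadingCoeff_mul_prod_roots]

theorem abs_leadingCoeff_lt_abs_coeff_zero {g : ℤ[X]} (hdeg : g.natDegree ≠ 0)
    (hroots : ∀ z : ℂ, aeval z g = 0 → 1 < ‖z‖) : |g.leadingCoeff| < |g.coeff 0| := by
  have hinj : Function.Injective (algebraMap ℤ ℂ) := Int.cast_injective
  have hnorm := norm_leadingCoeff_lt_norm_coeff_zero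
    (IsAlgClosed.splits (g.map (algebraMap ℤ ℂ)))
    (by rwa [natDegree_map_eq_of_injective hinj])
    fun z hz => hroots z (by rwa [← eval_map_algebraMap])
  rw [leadingCoeff_map_of_injective hinj, coeff_map] at hnorm
  simp only [algebraMap_int_eq, eq_intCast, Complex.norm_intCast] at hnorm
  exact_mod_cast hnorm

theorem sqrt_mul_add_one_le {a b : ℝ} (ha : 0 ≤ a) (hb : 0 ≤ b) :
    √(a * b) + 1 ≤ √((a + 1) * (b + 1)) := by
  refine Real.le_sqrt_of_sq_le ?_
  have h_amgm : 2 * √a * √b ≤ a + b := by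
    simpa only [Real.sq_sqrt, ha, hb] using two_mul_le_add_sq √a √b
  calc (√(a * b) + 1) ^ 2 = √(a * b) ^ 2 + 2 * √(a * b) + 1 := by ring
    _ = a * b + 2 * √a * √b + 1 := by
      rw [Real.sq_sqrt (mul_nonneg ha hb), Real.sqrt_mul ha, mul_assoc]
    _ ≤ a * b + (a + b) + 1 := by gcongr
    _ = (a + 1) * (b + 1) := by ring

theorem sqrt_abs_mul_add_one_le_sqrt_abs_mul {a b c d : ℤ} (hac : |a| < |c|) (hbd : |b| < |d|) :
    √|((a * b : ℤ) : ℝ)| + 1 ≤ √|((c * d : ℤ) : ℝ)| := by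
  have hac' : |(a : ℝ)| + 1 ≤ |(c : ℝ)| := by exact_mod_cast hac
  have hbd' : |(b : ℝ)| + 1 ≤ |(d : ℝ)| := by exact_mod_cast hbd
  push_cast
  rw [abs_mul, abs_mul]
  calc √(|(a : ℝ)| * |(b : ℝ)|) + 1 ≤ √((|(a : ℝ)| + 1) * (|(b : ℝ)| + 1)) :=
        sqrt_mul_add_one_le (abs_nonneg _) (abs_nonneg _)
    _ ≤ √(|(c : ℝ)| * |(d : ℝ)|) := by gcongr

theorem irreducible_of_isPrimitive_of_forall_natDegree_eq_zero {R : Type*} [CommSemiring R]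
    [NoZeroDivisors R] {p : R[X]} (hp : p.IsPrimitive)
    (hdeg : p.natDegree ≠ 0)
    (hfactor : ∀ g k : R[X], p = g * k → g.natDegree = 0 ∨ k.natDegree = 0) :
    Irreducible p := by
  have isUnit_of_dvd {q : R[X]} (hq : q ∣ p) (hq_deg : q.natDegree = 0) : IsUnit q := by
    obtain ⟨r, rfl⟩ := natDegree_eq_zero.mp hq_deg
    exact (hp r hq).map C
  exact ⟨fun hunit => hdeg (natDegree_eq_zero_of_isUnit hunit), fun g k hgk =>
    (hfactor g k hgk).imp (isUnit_of_dvd ⟨k, hgk⟩) (isUnit_of_dvd ⟨g, hgk.trans (mul_comm g k)⟩)⟩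

theorem irreducible_map_algebraMap_of_forall_natDegree_eq_zero {R : Type*} [CommRing R]
    [IsDomain R] [IsGCDMonoid R] (K : Type*) [Field K] [Algebra R K] [IsFractionRing R K]
    {p : R[X]} (hdeg : p.natDegree ≠ 0)
    (hfactor : ∀ g k : R[X], p = g * k → g.natDegree = 0 ∨ k.natDegree = 0) :
    Irreducible (p.map (algebraMap R K)) := by
  let := Classical.arbitrary (NormalizedGCDMonoid R)
  have hcontent : p.content ≠ 0 :=
    content_eq_zero_iff.not.mpr (ne_zero_of_natDegree_gt hdeg.bot_lt)
  have hprim : Irreducible p.primPart :=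
    irreducible_of_isPrimitive_of_forall_natDegree_eq_zero p.isPrimitive_primPart
      (by rwa [natDegree_primPart]) fun g k hgk => by
        have hp : p = C p.content * g * k := by
          rw [mul_assoc, ← hgk, ← eq_C_content_mul_primPart]
        simpa only [natDegree_C_mul hcontent] using hfactor _ _ hp
  have hunit : IsUnit (C (algebraMap R K p.content)) :=
    isUnit_C.mpr (IsUnit.mk0 _ (by simpa using hcontent))
  rw [p.eq_C_content_mul_primPart, Polynomial.map_mul, map_C, irreducible_isUnit_mul hunit]
  exact p.isPrimitive_primPart.irreducible_iff_irreducible_map_fraction_map.mp hprim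

theorem panitopol_stefanescu_general {f : ℤ[X]} (hdeg : f.natDegree ≠ 0)
    (hroots : ∀ z : ℂ, aeval z f = 0 → 1 < ‖z‖)
    (h : (f.coeff 0).natAbs.Prime ∨
      √(|f.coeff 0| : ℝ) - √(|f.leadingCoeff| : ℝ) < 1) :
    Irreducible (f.map (Int.castRingHom ℚ)) := by
  refine irreducible_map_algebraMap_of_forall_natDegree_eq_zero ℚ hdeg fun g k hgk => ?_
  by_contra! ⟨hg_deg, hk_deg⟩
  have hg : |g.leadingCoeff| < |g.coeff 0| :=
    abs_leadingCoeff_lt_abs_coeff_zero hg_deg fun z hz => hroots z (by simp [hgk, hz])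
  have hk : |k.leadingCoeff| < |k.coeff 0| :=
    abs_leadingCoeff_lt_abs_coeff_zero hk_deg fun z hz => hroots z (by simp [hgk, hz])
  rw [hgk, mul_coeff_zero, leadingCoeff_mul] at h
  rcases h with hprime | hsqrt
  · have coeff_zero_ne_one {q : ℤ[X]} (hq_deg : q.natDegree ≠ 0)
        (hq : |q.leadingCoeff| < |q.coeff 0|) : (q.coeff 0).natAbs ≠ 1 := by
      have := Int.one_le_abs (leadingCoeff_ne_zero.mpr (ne_zero_of_natDegree_gt hq_deg.bot_lt))
      intro hq_one
      zify at hq_one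
      omega
    rw [Int.natAbs_mul] at hprime
    exact Nat.not_prime_mul (coeff_zero_ne_one hg_deg hg) (coeff_zero_ne_one hk_deg hk) hprime
  · linarith [sqrt_abs_mul_add_one_le_sqrt_abs_mul hg hk]

/-- The Panitopol–Ştefănescu irreducibility criterion. -/
theorem panitopol_stefanescu (f : Polynomial ℤ) (n : ℕ) (hn : 1 ≤ n)
    (hdeg : f.natDegree = n)
    (hdom : |f.coeff 0| > ∑ i ∈ Finset.Icc 1 n, |f.coeff i|)
    (h : (f.coeff 0).natAbs.Prime ∨
      Real.sqrt (|f.coeff 0| : ℝ) - Real.sqrt (|f.coeff n| : ℝ) < 1) :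
    Irreducible (f.map (Int.castRingHom ℚ)) := by
  subst hdeg
  exact panitopol_stefanescu_general (Nat.one_le_iff_ne_zero.mp hn)
    (fun _ hz => one_lt_norm_of_aeval_eq_zero_of_sum_abs_lt hdom hz) h
end

section
/- Let p be a prime, let a, b be positive integers with p ∤ a·b, let k ≥ 2 with 3 ∤ k, let n ≥ 4, and let ε₁, ε₂ ∈ {−1, +1}. If p^k > a + b, then the polynomial a·X^n + b·ε₁·X^3 + p^k·ε₂ is irreducible in ℤ[X]. -/
open Polynomial

/-!
Let `m` be the middle exponent, `m = 3` in the theorem of Koley and Reddy, and give `X` the value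
`p ^ (-k / m)` in the `p`-adic Gauss norm. The constant term and the term of degree `m` are then
dominant, and they are the endpoints of an edge of the Newton polygon. As `k` and `m` are coprime,
the edge has no lattice point in its interior. So for a factorization `g * h` the whole edge comes
from one factor, and the constant coefficient of the other one is prime to `p`, hence `± 1`. But the
size of the constant coefficient `± p ^ k` forces all complex roots out of the closed unit disk, and
an integer polynomial with such roots and constant coefficient `± 1` is constant.
-/

section NewtonPolygon

open Finset.HasAntidiagonal (antidiagonal mem_antidiagonal)

variable {R Γ₀ : Type*} [Ring R] [LinearOrderedCommGroupWithZero Γ₀]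
  {v : Valuation R Γ₀} {c : Γ₀} {f g : R[X]} {i j : ℕ}

/-- The value of the term of degree `i` of `f`, when the coefficients are measured by `v` and `X`
is given the value `c`. -/
def termValue (v : Valuation R Γ₀) (c : Γ₀) (f : R[X]) (i : ℕ) : Γ₀ :=
  v (f.coeff i) * c ^ i

/-- `i` is the last index at which the terms of `f` attain their maximal value. In the Newton
polygon of `f` it is the abscissa of the right endpoint of the edge whose slope is given by `c`. -/
structure IsLastDominant (v : Valuation R Γ₀) (c : Γ₀) (f : R[X]) (i : ℕ) : Prop where
  le (j : ℕ) : termValue v c f j ≤ termValue v c f i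
  lt {j : ℕ} (hij : i < j) : termValue v c f j < termValue v c f i

lemma IsLastDominant.pos (hf : IsLastDominant v c f i) : 0 < termValue v c f i :=
  zero_le.trans_lt (hf.lt i.lt_succ_self)

lemma IsLastDominant.unique (hi : IsLastDominant v c f i) (hj : IsLastDominant v c f j) :
    i = j := by
  by_contra hne
  rcases Nat.lt_or_gt_of_ne hne with hij | hji
  · exact (hi.lt hij).not_ge (hj.le i)
  · exact (hj.lt hji).not_ge (hi.le j)

lemma exists_isLastDominant (hj : termValue v c f j ≠ 0) : ∃ i, IsLastDominant v c f i := by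
  have eq_zero {l : ℕ} (hl : l ∉ f.support) : termValue v c f l = 0 := by
    rw [termValue, notMem_support_iff.mp hl, map_zero, zero_mul]
  have hj_mem : j ∈ f.support := not_imp_comm.mp eq_zero hj
  obtain ⟨i, -, hmax⟩ :=
    f.support.exists_max_image (fun l ↦ toLex (termValue v c f l, l)) ⟨j, hj_mem⟩
  simp only [Prod.Lex.toLex_le_toLex] at hmax
  have le_of_mem {l : ℕ} (hl : l ∈ f.support) : termValue v c f l ≤ termValue v c f i :=
    (hmax l hl).elim le_of_lt fun h ↦ h.1.le
  have hi_pos : 0 < termValue v c f i := (zero_lt_iff.mpr hj).trans_le (le_of_mem hj_mem)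
  refine ⟨i, fun l ↦ ?_, fun {l} hil ↦ ?_⟩ <;> by_cases hl : l ∈ f.support
  · exact le_of_mem hl
  · exact (eq_zero hl).trans_le zero_le
  · exact (hmax l hl).resolve_right fun h ↦ hil.not_ge h.2
  · exact (eq_zero hl).trans_lt hi_pos

lemma termValue_mul_termValue (v : Valuation R Γ₀) (c : Γ₀) (f g : R[X]) (i j : ℕ) :
    termValue v c f i * termValue v c g j = v (f.coeff i * g.coeff j) * c ^ (i + j) := by
  rw [termValue, termValue, map_mul, pow_add, mul_mul_mul_comm]

lemma termValue_mul_zero (v : Valuation R Γ₀) (c : Γ₀) (f g : R[X]) :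
    termValue v c (f * g) 0 = termValue v c f 0 * termValue v c g 0 := by
  rw [termValue_mul_termValue, termValue, mul_coeff_zero]

lemma exists_termValue_mul_le (v : Valuation R Γ₀) (c : Γ₀) (f g : R[X]) (l : ℕ) :
    ∃ i j, i + j = l ∧ termValue v c (f * g) l ≤ termValue v c f i * termValue v c g j := by
  obtain ⟨⟨i, j⟩, hij, hmax⟩ := (antidiagonal l).exists_max_image
    (fun x ↦ v (f.coeff x.1 * g.coeff x.2)) ⟨(0, l), by simp⟩
  rw [mem_antidiagonal] at hij
  refine ⟨i, j, hij, ?_⟩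
  rw [termValue_mul_termValue, hij, termValue, coeff_mul]
  gcongr
  exact v.map_sum_le hmax

lemma IsLastDominant.mul_termValue_le (hf : IsLastDominant v c f i) (hg : IsLastDominant v c g j)
    (a b : ℕ) : termValue v c f a * termValue v c g b ≤ termValue v c f i * termValue v c g j :=
  mul_le_mul' (hf.le a) (hg.le b)

lemma IsLastDominant.mul_termValue_lt (hf : IsLastDominant v c f i) (hg : IsLastDominant v c g j)
    {a b : ℕ} (hab : i < a ∨ j < b) :
    termValue v c f a * termValue v c g b < termValue v c f i * termValue v c g j := by
  rcases hab with ha | hb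
  · exact mul_lt_mul_of_lt_of_le_of_nonneg_of_pos (hf.lt ha) (hg.le b) zero_le hg.pos
  · exact mul_lt_mul_of_le_of_lt_of_nonneg_of_pos (hf.le a) (hg.lt hb) zero_le hf.pos

lemma IsLastDominant.termValue_mul (hf : IsLastDominant v c f i) (hg : IsLastDominant v c g j) :
    termValue v c (f * g) (i + j) = termValue v c f i * termValue v c g j := by
  have lt_main : ∀ x ∈ (antidiagonal (i + j)).erase (i, j),
      v (f.coeff x.1 * g.coeff x.2) < v (f.coeff i * g.coeff j) := by
    rintro ⟨a, b⟩ hab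
    simp only [Finset.mem_erase, ne_eq, Prod.mk.injEq, mem_antidiagonal] at hab
    have h := hf.mul_termValue_lt hg (a := a) (b := b) (by lia)
    rw [termValue_mul_termValue, termValue_mul_termValue, hab.2] at h
    exact lt_of_mul_lt_mul_right' h
  have main_ne_zero : v (f.coeff i * g.coeff j) ≠ 0 := by
    have h := mul_pos hf.pos hg.pos
    rw [termValue_mul_termValue] at h
    exact left_ne_zero_of_mul h.ne'
  rw [termValue_mul_termValue, termValue, coeff_mul,
    ← Finset.add_sum_erase _ _ (mem_antidiagonal.mpr rfl : (i, j) ∈ _),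
    v.map_add_eq_of_lt_left (v.map_sum_lt main_ne_zero lt_main)]

lemma IsLastDominant.mul (hf : IsLastDominant v c f i) (hg : IsLastDominant v c g j) :
    IsLastDominant v c (f * g) (i + j) := by
  refine ⟨fun l ↦ ?_, fun {l} hl ↦ ?_⟩ <;> rw [hf.termValue_mul hg] <;>
    obtain ⟨a, b, hab, hle⟩ := exists_termValue_mul_le v c f g l
  · exact hle.trans (hf.mul_termValue_le hg a b)
  · exact hle.trans_lt (hf.mul_termValue_lt hg (by lia))

lemma IsLastDominant.termValue_zero_eq_of_mul
    (hf : IsLastDominant v c f i) (hg : IsLastDominant v c g j)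
    (hfg : termValue v c (f * g) 0 = termValue v c (f * g) (i + j)) :
    termValue v c f 0 = termValue v c f i ∧ termValue v c g 0 = termValue v c g j := by
  have hmul : termValue v c f 0 * termValue v c g 0 = termValue v c f i * termValue v c g j := by
    rw [← hf.termValue_mul hg, ← hfg, termValue_mul_zero]
  constructor
  · refine (hf.le 0).antisymm (le_of_not_gt fun hlt ↦ hmul.not_lt ?_)
    exact mul_lt_mul_of_lt_of_le_of_nonneg_of_pos hlt (hg.le 0) zero_le hg.pos
  · refine (hg.le 0).antisymm (le_of_not_gt fun hlt ↦ hmul.not_lt ?_)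
    exact mul_lt_mul_of_le_of_lt_of_nonneg_of_pos (hf.le 0) hlt zero_le hf.pos

lemma IsLastDominant.exists_add_eq_of_mul {m : ℕ} (hm : IsLastDominant v c (f * g) m)
    (hfg : termValue v c (f * g) 0 = termValue v c (f * g) m) :
    ∃ i j, i + j = m ∧ termValue v c f 0 = termValue v c f i ∧
      termValue v c g 0 = termValue v c g j := by
  have zero_ne_zero : termValue v c f 0 * termValue v c g 0 ≠ 0 := by
    rw [← termValue_mul_zero, hfg]
    exact hm.pos.ne'
  obtain ⟨i, hi⟩ := exists_isLastDominant (left_ne_zero_of_mul zero_ne_zero)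
  obtain ⟨j, hj⟩ := exists_isLastDominant (right_ne_zero_of_mul zero_ne_zero)
  obtain rfl : i + j = m := (hi.mul hj).unique hm
  exact ⟨i, j, rfl, hi.termValue_zero_eq_of_mul hj hfg⟩

lemma isLastDominant_of_coeff_le (hv : ∀ r, v r ≤ 1) (hc_pos : 0 < c) (hc_lt : c < 1)
    (h_i : v (f.coeff i) = 1) (h_low : ∀ l < i, v (f.coeff l) ≤ c ^ (i - l)) :
    IsLastDominant v c f i := by
  have value_i : termValue v c f i = c ^ i := by rw [termValue, h_i, one_mul]
  have value_lt {l : ℕ} (hl : i < l) : termValue v c f l < c ^ i := calc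
    termValue v c f l ≤ c ^ l := mul_le_of_le_one_left' (hv _)
    _ < c ^ i := pow_lt_pow_right_of_lt_one₀ hc_pos hc_lt hl
  refine ⟨fun l ↦ value_i ▸ ?_, fun hl ↦ value_i ▸ value_lt hl⟩
  rcases lt_trichotomy l i with hl | rfl | hl
  · calc
      termValue v c f l ≤ c ^ (i - l) * c ^ l := mul_le_mul_left (h_low l hl) _
      _ = c ^ i := by rw [← pow_add, Nat.sub_add_cancel hl.le]
  · exact value_i.le
  · exact (value_lt hl).le

end NewtonPolygon

section CoprimeSlope

open WithZero

variable {R Γ₀ : Type*} [Ring R] [LinearOrderedCommGroupWithZero Γ₀]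

/-- The `m`-th power of a valuation. Replacing `v` by it turns a slope `k / m` of the Newton polygon
into the integer `k`. -/
def powValuation (v : Valuation R Γ₀) {m : ℕ} (hm : m ≠ 0) : Valuation R Γ₀ :=
  v.map (powMonoidWithZeroHom hm) fun _ _ h ↦ pow_le_pow_left' h m

lemma powValuation_apply (v : Valuation R Γ₀) {m : ℕ} (hm : m ≠ 0) (r : R) :
    powValuation v hm r = v r ^ m :=
  rfl

lemma dvd_of_pow_eq_pow_mul_exp_neg_pow {x y : ℤᵐ⁰} {k m j : ℕ} (hx : x ≠ 0)
    (hkm : k.Coprime m) (h : x ^ m = y ^ m * exp (-k : ℤ) ^ j) : m ∣ j := by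
  have hxm : x ^ m ≠ 0 := pow_ne_zero m hx
  have hym : y ^ m ≠ 0 := left_ne_zero_of_mul (h ▸ hxm)
  have hlog := congrArg log h
  rw [log_mul hym (pow_ne_zero j exp_ne_zero), log_pow, log_pow, log_pow, log_exp] at hlog
  have hdvd : (m : ℤ) ∣ (k * j : ℕ) := ⟨log y - log x, by
    push_cast
    simp only [nsmul_eq_mul] at hlog
    linear_combination hlog⟩
  exact hkm.symm.dvd_of_dvd_mul_left (Int.natCast_dvd_natCast.mp hdvd)

lemma eq_one_of_mul_eq_of_pow_eq {x y z c : Γ₀} {m : ℕ} (hm : m ≠ 0) (hc : c ≠ 0)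
    (hy : y ≤ 1) (hz : z ≤ 1) (hxz : x * z = c) (h : x ^ m = y ^ m * c ^ m) : z = 1 := by
  have hx : x = y * c := (pow_left_inj₀ zero_le zero_le hm).mp (by rw [h, mul_pow])
  have hyz : y * z = 1 := mul_right_cancel₀ hc (by rw [mul_right_comm, ← hx, hxz, one_mul])
  exact hz.antisymm (hyz ▸ mul_le_of_le_one_left' hy)

/-- Version of the Dumas criterion: the edge from `(0, k)` to `(m, 0)` of the Newton polygon of
`g * h` has no interior lattice point, so it comes from only one of the factors. -/
theorem val_coeff_zero_eq_one_of_coprime_slope {v : Valuation R ℤᵐ⁰} (hv : ∀ r, v r ≤ 1)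
    {k m : ℕ} (hk : k ≠ 0) (hkm : k.Coprime m) {g h : R[X]}
    (h_zero : v ((g * h).coeff 0) = exp (-k : ℤ)) (h_m : v ((g * h).coeff m) = 1)
    (h_low : ∀ i < m, v ((g * h).coeff i) ^ m ≤ exp (-k : ℤ) ^ (m - i)) :
    v (g.coeff 0) = 1 ∨ v (h.coeff 0) = 1 := by
  have hm : m ≠ 0 := by
    rintro rfl
    rw [h_zero, ← exp_zero, exp_inj] at h_m
    lia
  set c : ℤᵐ⁰ := exp (-k : ℤ)
  have hc_pos : 0 < c := exp_pos
  have hc_lt : c < 1 := by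
    rw [← exp_zero, exp_lt_exp]
    lia
  set w := powValuation v hm
  have hgh : IsLastDominant w c (g * h) m :=
    isLastDominant_of_coeff_le (fun r ↦ pow_le_one' (hv r) m) hc_pos hc_lt
      (by rw [powValuation_apply, h_m, one_pow]) h_low
  have edge : termValue w c (g * h) 0 = termValue w c (g * h) m := by
    simp only [termValue, w, powValuation_apply, h_zero, h_m, one_pow, pow_zero, mul_one, one_mul]
  obtain ⟨i, j, hij, hgi, hhj⟩ := hgh.exists_add_eq_of_mul edge
  simp only [termValue, w, powValuation_apply, pow_zero, mul_one] at hgi hhj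
  have h_mul : v (g.coeff 0) * v (h.coeff 0) = c := by rw [← map_mul, ← mul_coeff_zero, h_zero]
  have m_dvd_i : m ∣ i :=
    dvd_of_pow_eq_pow_mul_exp_neg_pow (left_ne_zero_of_mul (h_mul ▸ hc_pos.ne')) hkm hgi
  rcases i.eq_zero_or_pos with rfl | hi
  · obtain rfl : j = m := by lia
    exact .inl (eq_one_of_mul_eq_of_pow_eq hm hc_pos.ne' (hv _) (hv _)
      (by rwa [mul_comm]) hhj)
  · obtain rfl : i = m := le_antisymm (by lia) (Nat.le_of_dvd hi m_dvd_i)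
    exact .inr (eq_one_of_mul_eq_of_pow_eq hm hc_pos.ne' (hv _) (hv _) h_mul hgi)

end CoprimeSlope

section Roots

lemma one_lt_norm_of_trinomial_eq_zero {A : Type*} [SeminormedRing A] [NormOneClass A]
    {a b c z : A} {m n : ℕ} (hc : ‖a‖ + ‖b‖ < ‖c‖) (hz : a * z ^ n + b * z ^ m + c = 0) :
    1 < ‖z‖ := by
  by_contra! hle
  have norm_mul_pow_le (x : A) (l : ℕ) : ‖x * z ^ l‖ ≤ ‖x‖ := calc
    ‖x * z ^ l‖ ≤ ‖x‖ * ‖z‖ ^ l := norm_mul_le_of_le le_rfl (norm_pow_le z l)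
    _ ≤ ‖x‖ := mul_le_of_le_one_right (norm_nonneg x) (pow_le_one₀ (norm_nonneg z) hle)
  have hc_le : ‖c‖ ≤ ‖a‖ + ‖b‖ := calc
    ‖c‖ = ‖a * z ^ n + b * z ^ m‖ := by rw [← norm_neg, eq_neg_of_add_eq_zero_left hz]
    _ ≤ ‖a‖ + ‖b‖ := norm_add_le_of_le (norm_mul_pow_le a n) (norm_mul_pow_le b m)
  exact hc.not_ge hc_le

lemma norm_leadingCoeff_lt_norm_coeff_zero_s17 {K : Type*} [NormedField K] {G : K[X]}
    (hsplits : G.Splits) (hdeg : G.natDegree ≠ 0) (hroot : ∀ z, G.IsRoot z → 1 < ‖z‖) :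
    ‖G.leadingCoeff‖ < ‖G.coeff 0‖ := by
  have hlead : 0 < ‖G.leadingCoeff‖ :=
    norm_pos_iff.mpr (leadingCoeff_ne_zero.mpr (ne_zero_of_natDegree_gt hdeg.bot_lt))
  have hprod : 1 < ‖G.roots.prod‖ := by
    refine Multiset.prod_induction_nonempty (1 < ‖·‖) (fun x y hx hy ↦ ?_) ?_
      fun z hz ↦ hroot z (isRoot_of_mem_roots hz)
    · rw [norm_mul]
      exact one_lt_mul_of_lt_of_le hx hy.le
    · intro hroots
      exact hdeg (by rw [hsplits.natDegree_eq_card_roots, hroots]; rfl)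
  rw [hsplits.coeff_zero_eq_leadingCoeff_mul_prod_roots]
  simpa only [norm_mul, norm_pow, norm_neg, norm_one, one_pow, one_mul]
    using lt_mul_of_one_lt_right hlead hprod

theorem isUnit_of_isUnit_coeff_zero_of_one_lt_norm_roots {g : ℤ[X]} (hg : IsUnit (g.coeff 0))
    (hroot : ∀ z : ℂ, aeval z g = 0 → 1 < ‖z‖) : IsUnit g := by
  suffices hdeg : g.natDegree = 0 by
    rw [eq_C_of_natDegree_eq_zero hdeg]
    exact hg.map C
  by_contra hdeg
  have hinj : Function.Injective (algebraMap ℤ ℂ) := (algebraMap ℤ ℂ).injective_int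
  have hlt := norm_leadingCoeff_lt_norm_coeff_zero_s17 (IsAlgClosed.splits (g.map (algebraMap ℤ ℂ)))
    (by rwa [natDegree_map_eq_of_injective hinj])
    fun z hz ↦ hroot z (by rwa [IsRoot, eval_map_algebraMap] at hz)
  rw [leadingCoeff_map_of_injective hinj, coeff_map, eq_intCast, eq_intCast, Complex.norm_intCast,
    Complex.norm_intCast, ← Int.cast_abs, ← Int.cast_abs, Int.cast_lt,
    Int.isUnit_iff_abs_eq.mp hg] at hlt
  have hlead : g.leadingCoeff ≠ 0 :=
    leadingCoeff_ne_zero.mpr (ne_zero_of_natDegree_gt (Nat.pos_of_ne_zero hdeg))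
  exact hlt.not_ge (Int.one_le_abs hlead)

end Roots

section Integers

open WithZero

lemma isUnit_of_dvd_prime_pow_of_not_dvd {M : Type*} [CommMonoidWithZero M] [IsCancelMulZero M]
    {q x : M} {k : ℕ} (hq : Prime q) (hx : x ∣ q ^ k) (hqx : ¬ q ∣ x) : IsUnit x := by
  obtain ⟨i, -, hxi⟩ := (dvd_prime_pow hq k).mp hx
  have hi : i = 0 := by
    by_contra hi
    exact hqx ((dvd_pow_self q hi).trans hxi.symm.dvd)
  rwa [hi, pow_zero, associated_one_iff_isUnit] at hxi

variable {p : ℕ} [Fact p.Prime]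

lemma padicValuation_prime_pow (k : ℕ) :
    Int.padicValuation p ((p : ℤ) ^ k) = exp (-k : ℤ) := by
  rw [map_pow, Int.padicValuation_self, ← exp_nsmul, smul_neg, nsmul_one]

lemma padicValuation_eq_of_associated {x y : ℤ} (h : Associated x y) :
    Int.padicValuation p x = Int.padicValuation p y := by
  rcases Int.associated_iff.mp h with rfl | rfl
  · rfl
  · exact Valuation.map_neg _ _

lemma padicValuation_le_of_dvd {x y : ℤ} (h : x ∣ y) :
    Int.padicValuation p y ≤ Int.padicValuation p x := by
  obtain ⟨z, rfl⟩ := h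
  rw [map_mul]
  exact mul_le_of_le_one_right' (Int.padicValuation_le_one p z)

/-- The hypothesis `h_low` says that `(i, v_p (f.coeff i))` is not below the segment from `(0, k)`
to `(m, 0)`. -/
theorem irreducible_of_coprime_slope_of_one_lt_norm_roots {k m : ℕ} (hk : k ≠ 0)
    (hkm : k.Coprime m) {f : ℤ[X]} (h_zero : Associated (f.coeff 0) ((p : ℤ) ^ k))
    (h_m : ¬ (p : ℤ) ∣ f.coeff m) (h_low : ∀ i < m, (p : ℤ) ^ (k * (m - i)) ∣ f.coeff i ^ m)
    (hroot : ∀ z : ℂ, aeval z f = 0 → 1 < ‖z‖) : Irreducible f := by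
  have hp : Prime (p : ℤ) := Nat.prime_iff_prime_int.mp Fact.out
  have isUnit_factor {g : ℤ[X]} (hg : g ∣ f) (hval : Int.padicValuation p (g.coeff 0) = 1) :
      IsUnit g := by
    refine isUnit_of_isUnit_coeff_zero_of_one_lt_norm_roots ?_ fun z hz ↦
      hroot z (aeval_eq_zero_of_dvd_aeval_eq_zero hg hz)
    exact isUnit_of_dvd_prime_pow_of_not_dvd hp ((map_dvd constantCoeff hg).trans h_zero.dvd)
      (Int.padicValuation_eq_one_iff.mp hval)
  refine ⟨fun hf ↦ ?_, fun g h hgh ↦ ?_⟩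
  · have hpk : IsUnit ((p : ℤ) ^ k) := h_zero.isUnit (hf.map constantCoeff)
    exact hp.not_isUnit ((isUnit_pow_iff hk).mp hpk)
  · subst hgh
    have h_low_val (i : ℕ) (hi : i < m) :
        Int.padicValuation p ((g * h).coeff i) ^ m ≤ exp (-k : ℤ) ^ (m - i) := by
      rw [← map_pow, ← padicValuation_prime_pow (p := p), ← map_pow, ← pow_mul]
      exact padicValuation_le_of_dvd (h_low i hi)
    refine (val_coeff_zero_eq_one_of_coprime_slope (Int.padicValuation_le_one p) hk hkm ?_
      (Int.padicValuation_eq_one_iff.mpr h_m) h_low_val).imp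
        (isUnit_factor (dvd_mul_right g h)) (isUnit_factor (dvd_mul_left h g))
    rw [padicValuation_eq_of_associated h_zero, padicValuation_prime_pow]

end Integers

theorem koley_reddy_S3_general {p k m n : ℕ} (hp : p.Prime) (hm : m ≠ 0) (hkm : k.Coprime m)
    (hmn : m < n) {a b c : ℤ} (hpb : ¬ (p : ℤ) ∣ b) (hc : Associated c ((p : ℤ) ^ k))
    (hbig : |a| + |b| < |c|) :
    Irreducible (C a * (X : ℤ[X]) ^ n + C b * X ^ m + C c) := by
  have : Fact p.Prime := ⟨hp⟩
  have h0n : 0 ≠ n := (hm.bot_lt.trans hmn).ne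
  have hk : k ≠ 0 := by
    rintro rfl
    have hb : b ≠ 0 := fun hb ↦ hpb (hb ▸ dvd_zero _)
    rw [pow_zero, associated_one_iff_isUnit, Int.isUnit_iff_abs_eq] at hc
    exact (hc ▸ hbig).not_ge (le_add_of_nonneg_of_le (abs_nonneg a) (Int.one_le_abs hb))
  apply irreducible_of_coprime_slope_of_one_lt_norm_roots (p := p) hk hkm
  · simpa [coeff_X_pow, hm.symm, h0n] using hc
  · simpa [coeff_X_pow, coeff_C, hm, hmn.ne, -eq_intCast] using hpb
  · intro i hi
    rcases eq_or_ne i 0 with rfl | hi_zero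
    · simpa [coeff_X_pow, hm.symm, h0n, pow_mul] using pow_dvd_pow_of_dvd hc.symm.dvd m
    · simp [coeff_X_pow, coeff_C, hi_zero, hi.ne, (hi.trans hmn).ne, hm, -eq_intCast]
  · intro z hz
    have hnorm : ‖(a : ℂ)‖ + ‖(b : ℂ)‖ < ‖(c : ℂ)‖ := by
      simp only [Complex.norm_intCast]
      exact_mod_cast hbig
    exact one_lt_norm_of_trinomial_eq_zero hnorm (by simpa using hz)

/-- Koley–Reddy: irreducibility of `aX^n + bε₁X³ + p^kε₂` when `p^k > a + b`,
`p ∤ ab`, `k ≥ 2`, `3 ∤ k`. -/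
theorem koley_reddy_S3 (p : ℕ) (hp : p.Prime) (a b : ℕ) (ha : 0 < a) (hb : 0 < b)
    (hpab : ¬ p ∣ a * b) (k : ℕ) (hk : 2 ≤ k) (h3k : ¬ 3 ∣ k)
    (n : ℕ) (hn : 4 ≤ n)
    (ε₁ ε₂ : ℤ) (hε₁ : ε₁ = 1 ∨ ε₁ = -1) (hε₂ : ε₂ = 1 ∨ ε₂ = -1)
    (hbig : a + b < p ^ k) :
    Irreducible (C (a : ℤ) * (X : Polynomial ℤ) ^ n +
      C ((b : ℤ) * ε₁) * X ^ 3 + C ((p : ℤ) ^ k * ε₂)) := by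
  have hε₁_unit : IsUnit ε₁ := Int.isUnit_iff.mpr hε₁
  have hε₂_unit : IsUnit ε₂ := Int.isUnit_iff.mpr hε₂
  have hk3 : k.Coprime 3 := (Nat.prime_three.coprime_iff_not_dvd.mpr h3k).symm
  have hpb : ¬ (p : ℤ) ∣ b * ε₁ := by
    rw [hε₁_unit.dvd_mul_right, Int.natCast_dvd_natCast]
    exact fun h ↦ hpab (h.mul_left a)
  refine koley_reddy_S3_general hp three_ne_zero hk3 hn hpb
    (associated_mul_unit_left _ _ hε₂_unit) ?_
  rw [abs_mul, abs_mul, Int.isUnit_iff_abs_eq.mp hε₁_unit, Int.isUnit_iff_abs_eq.mp hε₂_unit,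
    mul_one, mul_one, abs_pow, Nat.abs_cast, Nat.abs_cast, Nat.abs_cast]
  exact_mod_cast hbig
end
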